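/- arXiv:1802.00047 — 15 statements merged into one kernel-verified Lean document; each statement's English description precedes it below -/
import Mathlib

section
/- Let Ω ⊆ {1,…,n1}×{1,…,n2} be an index set of cardinality m. Then for almost every M ∈ V_Ω (with respect to the Lebesgue measure on V_Ω), every matrix Y ∈ ℝ^{n1×n2} with P_Ω(Y) = M satisfies rank(Y)·(n1+n2−rank(Y)) ≥ m, i.e., rank(Y) ≥ (n1+n2)/2 − sqrt((n1+n2)²/4 − m). Equivalently, the set of M ∈ V_Ω for which there exists Y with P_Ω(Y) = M and rank(Y)·(n1+n2−rank(Y)) < m has Lebesgue measure zero. -/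
/-!
If `Y` has rank `r`, some `r` of its rows, indexed by `S`, form a basis of its row space, so `Y` is
determined by these rows (`r * n2` numbers) and by the coefficients of the other `n1 - r` rows in
this basis (`(n1 - r) * r` numbers). Hence the `Ω`-entries of rank-`r` matrices lie in the union,
over the finitely many `S` of size `r`, of the ranges of polynomial maps from a space of dimension
`r * (n1 + n2 - r)` (`exists_rowParam_eq`, `contDiff_rowParam`). A `C¹` map does not increase
Hausdorff dimension, so when this dimension is less than `m` each range is Lebesgue-null
(`volume_range_eq_zero`).
-/

open MeasureTheory

/-- A space of smaller dimension has Lebesgue-null image under a `C¹` map. -/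
lemma volume_range_eq_zero {ι E : Type*} [Fintype ι] [NormedAddCommGroup E] [NormedSpace ℝ E]
    [FiniteDimensional ℝ E] {g : E → ι → ℝ} (hg : ContDiff ℝ 1 g)
    (h : Module.finrank ℝ E < Fintype.card ι) : volume (Set.range g) = 0 := by
  rw [← hausdorffMeasure_pi_real]
  have h1 : dimH (Set.range g) < ((Fintype.card ι : NNReal) : ENNReal) :=
    hg.dimH_range_le.trans_lt (by exact_mod_cast h)
  simpa using hausdorffMeasure_of_dimH_lt h1

/-- Coefficients expressing the rows outside `S` through the rows in `S`, together with the rows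
in `S`. -/
abbrev RowParam {n1 : ℕ} (n2 : ℕ) (S : Finset (Fin n1)) : Type :=
  ({i // i ∉ S} × {i // i ∈ S} → ℝ) × ({i // i ∈ S} × Fin n2 → ℝ)

/-- The matrix whose rows in `S` are given by `q.2` and whose other rows are the linear combinations
of these with coefficients `q.1`. -/
noncomputable def rowParam {n1 n2 : ℕ} (S : Finset (Fin n1)) (q : RowParam n2 S) :
    Matrix (Fin n1) (Fin n2) ℝ := fun i j =>
  if h : i ∈ S then q.2 (⟨i, h⟩, j) else ∑ k, q.1 (⟨i, h⟩, k) * q.2 (k, j)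

lemma finrank_rowParam {n1 : ℕ} (n2 : ℕ) (S : Finset (Fin n1)) :
    Module.finrank ℝ (RowParam n2 S) = S.card * (n1 + n2 - S.card) := by
  have h : S.card ≤ n1 := by simpa using S.card_le_univ
  have h1 : Fintype.card {i // i ∉ S} = n1 - S.card := by
    simp [Fintype.card_subtype_compl]
  simp only [RowParam, Module.finrank_prod, Module.finrank_fintype_fun_eq_card, Fintype.card_prod,
    h1, Fintype.card_coe, Fintype.card_fin]
  obtain ⟨c, hc⟩ := Nat.exists_eq_add_of_le h
  rw [show n1 + n2 - S.card = c + n2 by omega, show n1 - S.card = c by omega]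
  ring

lemma contDiff_rowParam {n1 n2 : ℕ} (S : Finset (Fin n1)) (i : Fin n1) (j : Fin n2) :
    ContDiff ℝ 1 (fun q : RowParam n2 S => rowParam S q i j) := by
  unfold rowParam
  split_ifs <;> fun_prop

/-- A set of rows forming a basis of the row space yields a parametrization of the matrix. -/
lemma exists_rowParam_eq {n1 n2 : ℕ} (Y : Matrix (Fin n1) (Fin n2) ℝ) :
    ∃ S : Finset (Fin n1), S.card = Y.rank ∧ ∃ q, rowParam S q = Y := by
  classical
  obtain ⟨κ, a, ha, hspan, hli⟩ := exists_linearIndependent' ℝ Y.row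
  have : Fintype κ := Fintype.ofInjective a ha
  let S : Finset (Fin n1) := Finset.univ.image a
  have hcard : S.card = Y.rank := by
    rw [Finset.card_image_of_injective _ ha, Matrix.rank_eq_finrank_span_row, ← hspan,
      finrank_span_eq_card hli, Finset.card_univ]
  have hmem (i : Fin n1) : ∃ c : {i // i ∈ S} → ℝ, ∑ k, c k • Y k.1 = Y i := by
    rw [← Submodule.mem_span_range_iff_exists_fun]
    have h1 : Y i ∈ Submodule.span ℝ (Set.range (Y.row ∘ a)) :=
      hspan ▸ Submodule.subset_span ⟨i, rfl⟩
    refine Submodule.span_mono ?_ h1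
    rintro _ ⟨k, rfl⟩
    exact ⟨⟨a k, by simp [S]⟩, rfl⟩
  choose c hc using hmem
  refine ⟨S, hcard, (fun p => c p.1 p.2, fun p => Y p.1 p.2), ?_⟩
  ext i j
  by_cases h : i ∈ S
  · simp [rowParam, h]
  · simpa [rowParam, h] using congrFun (hc i) j

/-- For a.e. `M ∈ V_Ω` (parametrized by its entries `f` on `Ω`), every matrix `Y`
with `P_Ω(Y) = M` satisfies `rank(Y)·(n1+n2−rank(Y)) ≥ m`, i.e.
`rank(Y) ≥ (n1+n2)/2 − sqrt((n1+n2)²/4 − m)`. -/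
theorem stmt_0 (n1 n2 m : ℕ) (hn1 : 2 ≤ n1) (hn2 : 2 ≤ n2)
    (Ω : Finset (Fin n1 × Fin n2)) (hΩ : Ω.card = m) :
    ∀ᵐ f : ({p : Fin n1 × Fin n2 // p ∈ Ω} → ℝ) ∂volume,
      ∀ Y : Matrix (Fin n1) (Fin n2) ℝ,
        (∀ (i : Fin n1) (j : Fin n2) (h : (i, j) ∈ Ω), Y i j = f ⟨(i, j), h⟩) →
        m ≤ Y.rank * (n1 + n2 - Y.rank) ∧
          (n1 + n2 : ℝ) / 2 - Real.sqrt ((n1 + n2 : ℝ) ^ 2 / 4 - (m : ℝ)) ≤ (Y.rank : ℝ) := by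
  have hnull : ∀ᵐ f : ({p : Fin n1 × Fin n2 // p ∈ Ω} → ℝ) ∂volume,
      ∀ S : Finset (Fin n1), S.card * (n1 + n2 - S.card) < m →
        f ∉ Set.range (fun (q : RowParam n2 S) (p : {p // p ∈ Ω}) => rowParam S q p.1.1 p.1.2) := by
    refine ae_all_iff.2 fun S => ?_
    by_cases hS : S.card * (n1 + n2 - S.card) < m
    · have h0 := volume_range_eq_zero
        (g := fun (q : RowParam n2 S) (p : {p // p ∈ Ω}) => rowParam S q p.1.1 p.1.2)
        (contDiff_pi.2 fun p => contDiff_rowParam S p.1.1 p.1.2)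
        (by rw [finrank_rowParam, Fintype.card_coe, hΩ]; exact hS)
      filter_upwards [measure_eq_zero_iff_ae_notMem.1 h0] with f hf _ using hf
    · exact Filter.Eventually.of_forall fun f h => absurd h hS
  filter_upwards [hnull] with f hf Y hY
  have hm : m ≤ Y.rank * (n1 + n2 - Y.rank) := by
    by_contra! hlt
    obtain ⟨S, hS, q, hq⟩ := exists_rowParam_eq Y
    refine hf S (hS ▸ hlt) ⟨q, ?_⟩
    funext p
    simpa only [hq] using hY p.1.1 p.1.2 p.2
  refine ⟨hm, ?_⟩
  have hr : Y.rank ≤ n1 + n2 := by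
    have := Y.rank_le_height
    omega
  have hmR : (m : ℝ) ≤ Y.rank * (n1 + n2 - Y.rank) := by
    have : ((m : ℕ) : ℝ) ≤ ((Y.rank * (n1 + n2 - Y.rank) : ℕ) : ℝ) := by exact_mod_cast hm
    simpa [Nat.cast_sub hr] using this
  -- Completing the square: `((n1 + n2) / 2 - r) ^ 2 = (n1 + n2) ^ 2 / 4 - r * (n1 + n2 - r)`.
  have := Real.le_sqrt_of_sq_le (x := (n1 + n2 : ℝ) / 2 - Y.rank)
    (y := (n1 + n2 : ℝ) ^ 2 / 4 - (m : ℝ)) (by nlinarith)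
  linarith
end

section
/- Let Ω ⊆ {1,…,n1}×{1,…,n2} be an index set of cardinality m. Then for almost every M ∈ V_Ω (with respect to the Lebesgue measure on V_Ω) the following holds: if Y* satisfies P_Ω(Y*) = M, the rank of Y* is minimal among all matrices Y with P_Ω(Y) = M, and rank(Y*)·(n1+n2−rank(Y*)) > m, then there exists a matrix Y ≠ Y* with P_Ω(Y) = M and rank(Y) = rank(Y*); that is, the minimum rank matrix completion problem has more than one optimal solution. -/
open MeasureTheory

/-!
Write `r` for the rank of `Y*`. Matrices of rank `r` near `Y*` are parametrized by normalized
factorizations `C * R` (the rows of `C` indexed by a row basis of `Y*` are unit vectors), which form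
an affine space of dimension `r (n1 + n2 - r)`; composing with `P_Ω` gives a polynomial map `Φ` with
rational coefficients from this space to `V_Ω`.

Instead of Sard's theorem for maps that lower the dimension, the proof uses that for almost every
`M` the entries of `M` are algebraically independent over `ℚ` (`ae_algebraicIndependent`), and that
`Φ` is then a submersion at *every* point of the fibre over `M`. Indeed, for any target vector `c`
there is a derivation `D` of `ℝ` over `ℚ` with `D M_p = c_p` (`exists_derivation_real`); applying
`D` to the coordinates of a point of the fibre gives a tangent vector, and by the Leibniz rule its
image under the derivative of `Φ` is `c`.

If `r (n1 + n2 - r) > m`, a submersion has a second point in the fibre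
(`exists_ne_of_hasStrictFDerivAt`). The corresponding completion differs from `Y*`, since normalized
factorizations are unique, and it has rank at most `r`, hence exactly `r` because `r` is minimal.
-/

open scoped Topology

/-- Algebraically independent reals can be differentiated independently: some `ℚ`-derivation of `ℝ`
takes prescribed values on them. Extend the family to a transcendence basis `t` of `ℝ` over `ℚ`;
since `ℝ` is separable algebraic over `Frac ℚ[t]`, it is formally étale over `ℚ[t]`, so
`ℝ ⊗ Ω[ℚ[t]⁄ℚ] ≃ Ω[ℝ⁄ℚ]` and derivations of the polynomial ring extend to `ℝ`. -/
theorem exists_derivation_real {σ : Type} (f : σ → ℝ) (hf : AlgebraicIndependent ℚ f)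
    (c : σ → ℝ) : ∃ D : Derivation ℚ ℝ ℝ, ∀ s, D (f s) = c s := by
  classical
  obtain ⟨t, hst, ht⟩ := exists_isTranscendenceBasis_superset hf.to_subtype_range
  have hinj : Function.Injective f := hf.injective
  let A := MvPolynomial t ℚ
  let φ : A →ₐ[ℚ] ℝ := MvPolynomial.aeval ((↑) : t → ℝ)
  have hφ : Function.Injective φ := ht.1
  let : Algebra A ℝ := φ.toRingHom.toAlgebra
  have : IsScalarTower ℚ A ℝ := IsScalarTower.of_algebraMap_eq' (RingHom.ext fun x => (φ.commutes x).symm)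
  have : FaithfulSMul A ℝ := (faithfulSMul_iff_algebraMap_injective A ℝ).2 hφ
  let : Algebra (FractionRing A) ℝ := FractionRing.liftAlgebra A ℝ
  have : IsScalarTower A (FractionRing A) ℝ := FractionRing.isScalarTower_liftAlgebra A ℝ
  have : Algebra.IsAlgebraic A ℝ := by
    refine ht.isAlgebraic_iff.2 fun x => ?_
    have : (x : ℝ) = algebraMap A ℝ (MvPolynomial.X x) :=
      (MvPolynomial.aeval_X ((↑) : t → ℝ) x).symm
    rw [this]
    exact isAlgebraic_algebraMap _
  have : Algebra.IsAlgebraic (FractionRing A) ℝ := 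
    ⟨fun x => (IsFractionRing.isAlgebraic_iff A (FractionRing A) ℝ).1
      (Algebra.IsAlgebraic.isAlgebraic x)⟩
  have : CharZero (FractionRing A) := inferInstance
  have : Algebra.FormallyEtale (FractionRing A) ℝ := Algebra.FormallyEtale.of_isSeparable _ ℝ
  have : Algebra.FormallyEtale A (FractionRing A) :=
    Algebra.FormallyEtale.of_isLocalization (nonZeroDivisors A)
  have : Algebra.FormallyEtale A ℝ := .comp A (FractionRing A) ℝ
  let g : t → ℝ := fun x => if h : ∃ s, f s = x then c h.choose else 0
  let D₀ : Derivation ℚ A ℝ := MvPolynomial.mkDerivation ℚ g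
  let L := D₀.liftKaehlerDifferential.liftBaseChange ℝ
  let D : Derivation ℚ ℝ ℝ := 
    (L ∘ₗ (KaehlerDifferential.tensorKaehlerEquivOfFormallyEtale ℚ A ℝ).symm.toLinearMap).compDer
      (KaehlerDifferential.D ℚ ℝ)
  refine ⟨D, fun s => ?_⟩
  let x : t := ⟨f s, hst ⟨s, rfl⟩⟩
  have hx : f s = algebraMap A ℝ (MvPolynomial.X x) :=
    (MvPolynomial.aeval_X ((↑) : t → ℝ) x).symm
  have hD : D (algebraMap A ℝ (MvPolynomial.X x)) = g x := by
    change L ((KaehlerDifferential.tensorKaehlerEquivOfFormallyEtale ℚ A ℝ).symm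
      (KaehlerDifferential.D ℚ ℝ _)) = _
    rw [KaehlerDifferential.tensorKaehlerEquivOfFormallyEtale_symm_D_algebraMap]
    simp only [L, D₀, LinearMap.liftBaseChange_tmul, one_smul,
      Derivation.liftKaehlerDifferential_comp_D]
    exact MvPolynomial.mkDerivation_X ℚ g x
  have h : ∃ s', f s' = x := ⟨s, rfl⟩
  rw [hx, hD]
  simp only [g, dif_pos h]
  exact congrArg c (hinj h.choose_spec)

/-- A nonzero real polynomial vanishes only on a null set. By Fubini: viewing it as a univariate
polynomial in the first variable, for almost every value of the other variables its leading
coefficient is nonzero, and then it has finitely many roots. -/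
theorem ae_eval_ne_zero_fin : ∀ (n : ℕ) (p : MvPolynomial (Fin n) ℝ), p ≠ 0 →
    ∀ᵐ x : Fin n → ℝ, MvPolynomial.eval x p ≠ 0
  | 0, p, hp => by
    refine Filter.Eventually.of_forall fun x h => hp ?_
    rw [MvPolynomial.eq_C_of_isEmpty p] at h ⊢
    simpa using h
  | n + 1, p, hp => by
    set q := MvPolynomial.finSuccEquiv ℝ n p with hq
    have hq0 : q ≠ 0 := by simpa [hq] using hp
    have ih := ae_eval_ne_zero_fin n q.leadingCoeff (by simpa using hq0)
    have hmeas : MeasurableSet {x : Fin (n+1) → ℝ | MvPolynomial.eval x p ≠ 0} := 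
      (MvPolynomial.continuous_eval p).measurable (measurableSet_singleton 0).compl
    have e := (volume_preserving_piFinSuccAbove (fun _ : Fin (n+1) => ℝ) 0).symm
    rw [← e.map_eq, ae_map_iff e.measurable.aemeasurable hmeas]
    have hsw : ∀ᵐ z : (Fin n → ℝ) × ℝ, MvPolynomial.eval (Fin.cons z.2 z.1 : Fin (n+1) → ℝ) p ≠ 0 := by
      refine (Measure.ae_prod_iff_ae_ae (hmeas.preimage (by fun_prop))).2 ?_
      filter_upwards [ih] with y hy
      have : q.map (MvPolynomial.eval y) ≠ 0 := by
        intro h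
        apply hy
        have := congrArg (fun r => r.coeff q.natDegree) h
        simpa using this
      refine (Set.Finite.countable (Polynomial.finite_setOfPred_isRoot this)).ae_notMem volume |>.mono ?_
      intro t ht h
      apply ht
      rw [MvPolynomial.eval_eq_eval_mv_eval'] at h
      exact h
    have hsw' := (Measure.measurePreserving_swap
      (μ := (volume : Measure ℝ)) (ν := (volume : Measure (Fin n → ℝ)))).quasiMeasurePreserving.ae hsw
    filter_upwards [hsw'] with z hz
    simpa [MeasurableEquiv.piFinSuccAbove_symm_apply, Fin.insertNthEquiv] using hz

/-- Failure of algebraic independence over `ℚ` means lying on one of the countably many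
hypersurfaces cut out by nonzero rational polynomials. -/
theorem ae_algebraicIndependent {σ : Type} [Fintype σ] :
    ∀ᵐ f : σ → ℝ, AlgebraicIndependent ℚ f := by
  let e := Fintype.equivFin σ
  have : Countable (MvPolynomial (Fin (Fintype.card σ)) ℚ) := by
    rw [← Cardinal.mk_le_aleph0_iff]
    exact MvPolynomial.cardinalMk_le_max.trans (by simp)
  have key : ∀ᵐ x : Fin (Fintype.card σ) → ℝ, ∀ p : MvPolynomial (Fin (Fintype.card σ)) ℚ,
      p ≠ 0 → MvPolynomial.aeval x p ≠ 0 := by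
    refine ae_all_iff.2 fun p => ?_
    by_cases hp : p = 0
    · simp [hp]
    have := ae_eval_ne_zero_fin _ (MvPolynomial.map (algebraMap ℚ ℝ) p)
      ((map_ne_zero_iff _ (MvPolynomial.map_injective _ (algebraMap ℚ ℝ).injective)).2 hp)
    filter_upwards [this] with x hx _
    rwa [MvPolynomial.eval_map, ← MvPolynomial.aeval_def] at hx
  have hmp := volume_measurePreserving_piCongrLeft (fun _ : Fin (Fintype.card σ) => ℝ) e
  filter_upwards [hmp.quasiMeasurePreserving.ae key] with f hf
  have hfe : AlgebraicIndependent ℚ (f ∘ e.symm) := by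
    refine (injective_iff_map_eq_zero _).2 fun p hp => ?_
    by_contra h0
    refine hf p h0 ?_
    convert hp using 2
    congr 1
    ext s
    obtain ⟨i, rfl⟩ := e.surjective s
    rw [Function.comp_apply, e.symm_apply_apply]
    exact Equiv.piCongrLeft_apply_apply (fun _ => ℝ) e f i
  exact (algebraicIndependent_equiv e.symm).1 hfe

/-- A submersion to a space of smaller dimension is not injective at the base point, even on a single
fibre. Adjoining to `Φ` a linear functional `l` that does not vanish on `ker Φ'` keeps the derivative
surjective, so `(Φ, l)` is open at `a`, and `l` can be varied while `Φ` stays equal to `Φ a`. -/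
theorem exists_ne_of_hasStrictFDerivAt {E F : Type*} [NormedAddCommGroup E] [NormedSpace ℝ E]
    [FiniteDimensional ℝ E] [NormedAddCommGroup F] [NormedSpace ℝ F] [FiniteDimensional ℝ F]
    {Φ : E → F} {Φ' : E →L[ℝ] F} {a : E} (hΦ : HasStrictFDerivAt Φ Φ' a)
    (hsurj : Function.Surjective Φ') (hdim : Module.finrank ℝ F < Module.finrank ℝ E) :
    ∃ x, x ≠ a ∧ Φ x = Φ a := by
  have : CompleteSpace E := FiniteDimensional.complete ℝ E
  have : CompleteSpace F := FiniteDimensional.complete ℝ F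
  obtain ⟨v, hv, hv0⟩ := (Submodule.ne_bot_iff _).1
    (LinearMap.ker_ne_bot_of_finrank_lt (f := Φ'.toLinearMap) hdim)
  replace hv : Φ' v = 0 := hv
  obtain ⟨l, hl⟩ := SeparatingDual.exists_eq_one (R := ℝ) hv0
  have hG : HasStrictFDerivAt (fun x => (Φ x, l x)) (Φ'.prod l) a :=
    hΦ.prodMk l.hasStrictFDerivAt
  have hrange : (Φ'.prod l).range = ⊤ := by
    refine LinearMap.range_eq_top.2 fun ⟨w, t⟩ => ?_
    obtain ⟨u, hu⟩ := hsurj w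
    exact ⟨u + (t - l u) • v, by simp [hu, hv, hl]⟩
  have hopen : Set.range (fun x => (Φ x, l x)) ∈ 𝓝 (Φ a, l a) := by
    rw [← hG.map_nhds_eq_of_surj hrange, ← Set.image_univ]
    exact Filter.image_mem_map Filter.univ_mem
  have hev : ∀ᶠ t in 𝓝 (l a), (Φ a, t) ∈ Set.range (fun x => (Φ x, l x)) :=
    (Continuous.prodMk_right (Φ a)).continuousAt.eventually hopen
  obtain ⟨t, ⟨x, hx⟩, ht⟩ :=
    ((hev.filter_mono nhdsWithin_le_nhds).and (self_mem_nhdsWithin (s := {l a}ᶜ))).exists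
  simp only [Prod.mk.injEq] at hx
  refine ⟨x, ?_, hx.1⟩
  rintro rfl
  exact ht hx.2.symm

/-- For a.e. `M ∈ V_Ω` (parametrized by its entries `f` on `Ω`): if `Y*` is a
minimum-rank completion of `M` and `rank(Y*)·(n1+n2−rank(Y*)) > m`, then the minimum rank
matrix completion problem has more than one optimal solution. -/
theorem stmt_1 (n1 n2 m : ℕ) (hn1 : 2 ≤ n1) (hn2 : 2 ≤ n2)
    (Ω : Finset (Fin n1 × Fin n2)) (hΩ : Ω.card = m) :
    ∀ᵐ f : ({p : Fin n1 × Fin n2 // p ∈ Ω} → ℝ) ∂volume,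
      ∀ Ystar : Matrix (Fin n1) (Fin n2) ℝ,
        (∀ (i : Fin n1) (j : Fin n2) (h : (i, j) ∈ Ω), Ystar i j = f ⟨(i, j), h⟩) →
        (∀ Y : Matrix (Fin n1) (Fin n2) ℝ,
          (∀ (i : Fin n1) (j : Fin n2) (h : (i, j) ∈ Ω), Y i j = f ⟨(i, j), h⟩) →
          Ystar.rank ≤ Y.rank) →
        m < Ystar.rank * (n1 + n2 - Ystar.rank) →
        ∃ Y : Matrix (Fin n1) (Fin n2) ℝ, Y ≠ Ystar ∧
          (∀ (i : Fin n1) (j : Fin n2) (h : (i, j) ∈ Ω), Y i j = f ⟨(i, j), h⟩) ∧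
          Y.rank = Ystar.rank := by
  classical
  filter_upwards [ae_algebraicIndependent] with f hf Ystar hY hmin hlt
  obtain ⟨κ, a, ha, hspan, hli⟩ := exists_linearIndependent' ℝ Ystar.row
  have : Finite κ := Finite.of_injective a ha
  have := Fintype.ofFinite κ
  have hr : Fintype.card κ = Ystar.rank := by
    rw [Matrix.rank_eq_finrank_span_row, ← hspan]
    exact (finrank_span_eq_card hli).symm
  let R : Matrix κ (Fin n2) ℝ := fun k => Ystar (a k)
  have hR : LinearIndependent ℝ R := hli
  -- Factor `Ystar = C * R`, where the rows of `R` are a maximal independent set of rows of `Ystar`.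
  have hC : ∀ i, ∃ c : κ → ℝ, ∑ k, c k • R k = Ystar i := fun i => by
    have : Ystar.row i ∈ Submodule.span ℝ (Set.range R) := by
      change _ ∈ Submodule.span ℝ (Set.range (Ystar.row ∘ a))
      rw [hspan]
      exact Submodule.subset_span ⟨i, rfl⟩
    exact (Submodule.mem_span_range_iff_exists_fun ℝ).1 this
  choose C hC using hC
  have hCR : ∀ i j, ∑ k, C i k * R k j = Ystar i j := fun i j => by
    simpa using congrFun (hC i) j
  have hCa : ∀ k, C (a k) = Pi.single k 1 := fun k => by
    have h : ∑ k', (C (a k) - (Pi.single k 1 : κ → ℝ)) k' • R k' = 0 := by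
      simp [sub_smul, Finset.sum_sub_distrib, hC, Pi.single_apply, R]
    funext k'
    exact sub_eq_zero.1 (Fintype.linearIndependent_iff.1 hR _ h k')
  -- `X` parametrizes perturbations of the factorization that keep the rows `C (a k)` equal to
  -- unit vectors; this removes the `GL_r` ambiguity, so that `dim X = r (n1 + n2 - r)`.
  -- `U i k` and `V k j` are the perturbations of the entries `C i k` and `R k j`.
  let X := ({i // i ∉ Set.range a} → κ → ℝ) × (κ → Fin n2 → ℝ)
  let U : Fin n1 → κ → X →L[ℝ] ℝ := fun i k =>
    if h : i ∈ Set.range a then 0 else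
      ContinuousLinearMap.proj k ∘L ContinuousLinearMap.proj ⟨i, h⟩ ∘L
        ContinuousLinearMap.fst ℝ _ _
  let V : κ → Fin n2 → X →L[ℝ] ℝ := fun k j =>
    ContinuousLinearMap.proj j ∘L ContinuousLinearMap.proj k ∘L ContinuousLinearMap.snd ℝ _ _
  have hUa : ∀ k k' x, U (a k) k' x = 0 := fun k k' x => by simp [U]
  have hUn : ∀ i (h : i ∉ Set.range a) k x, U i k x = x.1 ⟨i, h⟩ k := fun i h k x => by
    simp only [U, dif_neg h]
    rfl
  let Z : X → Matrix (Fin n1) (Fin n2) ℝ := fun x =>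
    (Matrix.of fun i k => C i k + U i k x) * (Matrix.of fun k j => R k j + V k j x)
  have hZ : ∀ x i j, Z x i j = ∑ k, (C i k + U i k x) * (R k j + V k j x) := fun x i j => by
    simp [Z, Matrix.mul_apply]
  let Φ : X → (Ω → ℝ) := fun x p => Z x p.1.1 p.1.2
  let Φ' : X →L[ℝ] (Ω → ℝ) := ContinuousLinearMap.pi fun p =>
    ∑ k, (C p.1.1 k • V k p.1.2 + R k p.1.2 • U p.1.1 k)
  have hΦ : HasStrictFDerivAt Φ Φ' 0 := by
    refine hasStrictFDerivAt_pi.2 fun p => ?_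
    simp only [hZ]
    refine HasStrictFDerivAt.fun_sum fun k _ => ?_
    have h1 := ((U p.1.1 k).hasStrictFDerivAt (x := 0)).const_add (C p.1.1 k)
    have h2 := ((V k p.1.2).hasStrictFDerivAt (x := 0)).const_add (R k p.1.2)
    have h3 := h1.mul h2
    simp only [map_zero, add_zero] at h3
    exact h3
  have hsurj : Function.Surjective Φ' := fun c => by
    -- A preimage of `c` is obtained by applying `D` to the entries of `C` and `R`: as `D` kills the
    -- entries `0, 1` of the rows `C (a k)`, this respects the normalization, and the Leibniz rule
    -- for `f = C * R` on `Ω` says exactly that it is mapped to `D ∘ f = c`.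
    obtain ⟨D, hD⟩ := exists_derivation_real f hf c
    refine ⟨(fun i k => D (C i k), fun k j => D (R k j)), ?_⟩
    funext ⟨⟨i, j⟩, hp⟩
    have hU : ∀ k, U i k (fun i k => D (C i k), fun k j => D (R k j)) = D (C i k) := fun k => by
      by_cases h : i ∈ Set.range a
      · obtain ⟨k₀, rfl⟩ := h
        rw [hUa, hCa, Pi.single_apply]
        split_ifs <;> simp
      · rw [hUn i h]
    have hV : ∀ k, V k j (fun i k => D (C i k), fun k j => D (R k j)) = D (R k j) := fun k => rfl
    rw [← hD, ← hY i j hp, ← hCR i j, map_sum]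
    simp [Φ', hU, hV, Derivation.leibniz]
  have hdim : Module.finrank ℝ (Ω → ℝ) < Module.finrank ℝ X := by
    have hcard : Fintype.card {i // i ∉ Set.range a} = n1 - Ystar.rank := by
      rw [Fintype.card_subtype_compl, Fintype.card_fin, ← hr]
      congr 1
      exact Set.card_range_of_injective ha
    have hle : Ystar.rank ≤ n1 := by simpa using Ystar.rank_le_card_height
    simp only [X, Module.finrank_prod, Module.finrank_pi_fintype, Module.finrank_self,
      Finset.sum_const, Finset.card_univ, hcard, hr, smul_eq_mul, mul_one, Fintype.card_fin,
      Fintype.card_coe, hΩ]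
    calc m < _ := hlt
      _ = (n1 - Ystar.rank) * Ystar.rank + Ystar.rank * n2 := by
        rw [Nat.sub_add_comm hle]; ring
  obtain ⟨x, hx0, hx⟩ := exists_ne_of_hasStrictFDerivAt hΦ hsurj hdim
  have hZ0 : Z 0 = Ystar := by
    ext i j
    simp [hZ, hCR]
  have hZf : ∀ (i : Fin n1) (j : Fin n2) (h : (i, j) ∈ Ω), Z x i j = f ⟨(i, j), h⟩ :=
    fun i j h => by
      have := congrFun hx ⟨(i, j), h⟩
      simp only [Φ, hZ0, hY i j h] at this
      exact this
  refine ⟨Z x, fun hZx => hx0 ?_, hZf, le_antisymm ?_ (hmin _ hZf)⟩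
  -- The normalized factorization of a rank `r` matrix is unique: comparing rows `a k` gives the
  -- second factor, and then independence of the rows of `R` gives the first.
  · have hV : ∀ k j, V k j x = 0 := fun k j => by
      have := congrFun (congrFun hZx (a k)) j
      simp only [hZ, hUa, hCa, add_zero, Pi.single_apply, ite_mul, one_mul, zero_mul,
        Finset.sum_ite_eq', Finset.mem_univ, if_true] at this
      simpa [R] using this
    have hU : ∀ i k, U i k x = 0 := fun i => by
      refine Fintype.linearIndependent_iff.1 hR _ ?_
      funext j
      have := congrFun (congrFun hZx i) j
      simp only [hZ, hV, add_zero, add_mul, Finset.sum_add_distrib, hCR] at this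
      simpa using this
    refine Prod.ext ?_ ?_
    · funext i k
      exact (hUn i i.2 k x).symm.trans (hU i k)
    · funext k j
      exact hV k j
  · exact (Matrix.rank_mul_le_left _ _).trans ((Matrix.rank_le_card_width _).trans hr.le)
end

section
/- Let Ȳ ∈ ℝ^{n1×n2} have rank r and satisfy P_Ω(Ȳ) = M, and suppose Ȳ is well-posed, i.e., V_{Ω^c} ∩ T(Ȳ) = {0}. Then Ȳ is a locally unique solution of the minimum rank matrix completion problem: there exists ε > 0 such that every matrix Y with ‖Y − Ȳ‖ < ε, Y ≠ Ȳ, and P_Ω(Y) = M satisfies rank(Y) ≠ r. -/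
/-!
Write `A = Ȳ`, choose a generalized inverse `G` of `A` (so `A G A = A`), and put `P = 1 - A G`,
`Q = 1 - G A`. Any `H` with `P H Q = 0` lies in the tangent space `{Q₁ A + A Q₂}`, so
well-posedness says that `H ↦ P H Q` is injective on the space `V` of matrices vanishing on `Ω`.

For `Y` near `A`, let `B = 1 + G (Y - A)` (invertible, close to `1`) and let `B'` be its adjugate.
Since `A G Y = A B`, the matrix `A G Y` has the rank of `A`. If `Y` has that rank too, then `A G Y`
and `Y` have the same kernel; as `A G Y B' Q = det B • A Q = 0`, also `Y B' Q = 0`, and hence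
`P (Y - A) B' Q = 0` (`mul_adjugate_mul_eq_zero`). By compactness of the unit sphere of `V`, the map
`H ↦ P H B' Q`, a small perturbation of `H ↦ P H Q`, is still injective on `V`, which forces
`Y = A` when `Y - A ∈ V`.
-/

open Filter Topology

/-- Every matrix over a field has a generalized (inner) inverse. -/
lemma exists_mul_mul_eq_self {m n : ℕ} (A : Matrix (Fin m) (Fin n) ℝ) :
    ∃ G : Matrix (Fin n) (Fin m) ℝ, A * G * A = A := by
  let f := Matrix.toLin' A
  obtain ⟨g, hg⟩ := f.rangeRestrict.exists_rightInverse_of_surjective f.range_rangeRestrict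
  obtain ⟨g', hg'⟩ := LinearMap.exists_extend g
  refine ⟨LinearMap.toMatrix' g', ?_⟩
  apply Matrix.toLin'.injective
  rw [Matrix.toLin'_mul, Matrix.toLin'_mul, Matrix.toLin'_toMatrix']
  refine LinearMap.ext fun x => ?_
  have h1 : g' (f x) = g (f.rangeRestrict x) :=
    LinearMap.congr_fun hg' (f.rangeRestrict x)
  have h2 : f.rangeRestrict (g (f.rangeRestrict x)) = f.rangeRestrict x :=
    LinearMap.congr_fun hg (f.rangeRestrict x)
  have h3 : f (g' (f x)) = f x := by
    rw [h1]
    exact congrArg Subtype.val h2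
  exact h3

/-- If left multiplication by `C` does not lower the rank of `Y`, it does not enlarge its kernel. -/
lemma mul_eq_zero_of_rank_mul_eq {l m n k : ℕ} (C : Matrix (Fin l) (Fin m) ℝ)
    (Y : Matrix (Fin m) (Fin n) ℝ) (h : (C * Y).rank = Y.rank)
    (X : Matrix (Fin n) (Fin k) ℝ) (hX : C * Y * X = 0) : Y * X = 0 := by
  have hle : LinearMap.ker Y.mulVecLin ≤ LinearMap.ker (C * Y).mulVecLin := by
    intro x hx
    simp only [LinearMap.mem_ker, Matrix.mulVecLin_apply] at hx ⊢
    rw [← Matrix.mulVec_mulVec, hx, Matrix.mulVec_zero]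
  have h1 := Y.mulVecLin.finrank_range_add_finrank_ker
  have h2 := (C * Y).mulVecLin.finrank_range_add_finrank_ker
  unfold Matrix.rank at h
  have heq := Submodule.eq_of_le_of_finrank_eq hle (by omega)
  ext i j
  have hj : X.col j ∈ LinearMap.ker (C * Y).mulVecLin := by
    rw [LinearMap.mem_ker, Matrix.mulVecLin_apply]
    ext a
    exact congrFun (congrFun hX a) j
  rw [← heq, LinearMap.mem_ker, Matrix.mulVecLin_apply] at hj
  exact congrFun hj i

/-- A matrix `Y` of the same rank as `A`, close enough to `A` that `1 + G (Y - A)` is invertible,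
satisfies this linearized rank equation. -/
lemma mul_adjugate_mul_eq_zero {m n : ℕ} (A Y : Matrix (Fin m) (Fin n) ℝ)
    (G : Matrix (Fin n) (Fin m) ℝ) (hG : A * G * A = A) (hr : Y.rank = A.rank)
    (hdet : (1 + G * (Y - A)).det ≠ 0) :
    (1 - A * G) * (Y - A) * (1 + G * (Y - A)).adjugate * (1 - G * A) = 0 := by
  set B := 1 + G * (Y - A) with hB
  have hAB : A * G * Y = A * B := by
    rw [hB, Matrix.mul_add, Matrix.mul_one, ← Matrix.mul_assoc, Matrix.mul_sub, hG]
    abel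
  have hrk : (A * G * Y).rank = Y.rank := by
    rw [hAB, Matrix.rank_mul_eq_left_of_isUnit_det _ _ (isUnit_iff_ne_zero.2 hdet), hr]
  have h0 : Y * (B.adjugate * (1 - G * A)) = 0 := by
    apply mul_eq_zero_of_rank_mul_eq (A * G) Y hrk
    rw [hAB, Matrix.mul_assoc, ← Matrix.mul_assoc B, Matrix.mul_adjugate, Matrix.smul_mul,
      Matrix.mul_smul, Matrix.one_mul, Matrix.mul_sub, Matrix.mul_one, ← Matrix.mul_assoc, hG,
      sub_self, smul_zero]
  have hP : (1 - A * G) * (Y - A) = (1 - A * G) * Y := by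
    rw [Matrix.mul_sub, Matrix.sub_mul 1 (A * G) A, hG, Matrix.one_mul, sub_self, sub_zero]
  rw [hP, Matrix.mul_assoc, Matrix.mul_assoc, h0, Matrix.mul_zero]


attribute [local instance] Matrix.normedAddCommGroup

/-- If `Ȳ` has rank `r`, `P_Ω(Ȳ) = M`, and `Ȳ` is well-posed
(`V_{Ω^c} ∩ T(Ȳ) = {0}`), then `Ȳ` is a locally unique solution of the minimum rank
matrix completion problem. -/
theorem stmt_2 (n1 n2 r : ℕ) (hn1 : 2 ≤ n1) (hn2 : 2 ≤ n2)
    (Ω : Finset (Fin n1 × Fin n2))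
    (Ybar : Matrix (Fin n1) (Fin n2) ℝ) (hrank : Ybar.rank = r)
    (hwp : ∀ H : Matrix (Fin n1) (Fin n2) ℝ,
      (∀ (i : Fin n1) (j : Fin n2), (i, j) ∈ Ω → H i j = 0) →
      (∃ (Q1 : Matrix (Fin n1) (Fin n1) ℝ) (Q2 : Matrix (Fin n2) (Fin n2) ℝ),
        H = Q1 * Ybar + Ybar * Q2) → H = 0) :
    ∃ ε > (0 : ℝ), ∀ Y : Matrix (Fin n1) (Fin n2) ℝ,
      ‖Y - Ybar‖ < ε → Y ≠ Ybar →
      (∀ (i : Fin n1) (j : Fin n2), (i, j) ∈ Ω → Y i j = Ybar i j) →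
      Y.rank ≠ r := by
  obtain ⟨G, hG⟩ := exists_mul_mul_eq_self Ybar
  let K : Set (Matrix (Fin n1) (Fin n2) ℝ) :=
    Metric.sphere 0 1 ∩ {H | ∀ (i : Fin n1) (j : Fin n2), (i, j) ∈ Ω → H i j = 0}
  have hK : IsCompact K := by
    have : ProperSpace (Matrix (Fin n1) (Fin n2) ℝ) :=
      inferInstanceAs (ProperSpace (Fin n1 → Fin n2 → ℝ))
    refine (isCompact_sphere _ _).inter_right ?_
    simp only [Set.ofPred_forall]
    exact isClosed_iInter fun i => isClosed_iInter fun j => isClosed_iInter fun _ =>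
      isClosed_eq (continuous_id.matrix_elem i j) continuous_const
  have hB : Continuous fun Y : Matrix (Fin n1) (Fin n2) ℝ => 1 + G * (Y - Ybar) :=
    continuous_const.add (continuous_const.matrix_mul (continuous_id.sub continuous_const))
  have hev1 : ∀ᶠ Y in 𝓝 Ybar, (1 + G * (Y - Ybar)).det ≠ 0 :=
    hB.matrix_det.continuousAt.eventually_ne (by simp)
  have hev2 : ∀ᶠ Y in 𝓝 Ybar, ∀ H ∈ K,
      (1 - Ybar * G) * H * (1 + G * (Y - Ybar)).adjugate * (1 - G * Ybar) ≠ 0 := by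
    refine hK.eventually_forall_of_forall_eventually fun H hH => ?_
    have hc : Continuous fun z : Matrix (Fin n1) (Fin n2) ℝ × Matrix (Fin n1) (Fin n2) ℝ =>
        (1 - Ybar * G) * z.2 * (1 + G * (z.1 - Ybar)).adjugate * (1 - G * Ybar) :=
      ((continuous_const.matrix_mul continuous_snd).matrix_mul
        (hB.comp continuous_fst).matrix_adjugate).matrix_mul continuous_const
    refine hc.continuousAt.eventually_ne ?_
    intro h0
    simp only [sub_self, Matrix.mul_zero, add_zero, Matrix.adjugate_one, Matrix.mul_one] at h0
    have hH0 : H = 0 := by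
      refine hwp H hH.2 ⟨H * G - Ybar * G * H * G, G * H, ?_⟩
      simp only [Matrix.sub_mul, Matrix.mul_sub, Matrix.one_mul, Matrix.mul_one,
        Matrix.mul_assoc] at h0 ⊢
      rw [← sub_eq_zero, ← h0]
      abel
    have h1 := hH.1
    rw [hH0] at h1
    simp at h1
  obtain ⟨ε, hε, hball⟩ := Metric.eventually_nhds_iff.1 (hev1.and hev2)
  refine ⟨ε, hε, fun Y hY hne hΩ hYr => ?_⟩
  obtain ⟨hdet, hinj⟩ := hball (by rwa [dist_eq_norm] : dist Y Ybar < ε)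
  have hE : ‖Y - Ybar‖ ≠ 0 := norm_ne_zero_iff.2 (sub_ne_zero.2 hne)
  let _ : NormedSpace ℝ (Matrix (Fin n1) (Fin n2) ℝ) := Matrix.normedSpace
  refine hinj (‖Y - Ybar‖⁻¹ • (Y - Ybar)) ⟨?_, ?_⟩ ?_
  · rw [mem_sphere_zero_iff_norm, norm_smul, norm_inv, norm_norm, inv_mul_cancel₀ hE]
  · intro i j hij
    simp [hΩ i j hij]
  · rw [Matrix.mul_smul, Matrix.smul_mul, Matrix.smul_mul,
      mul_adjugate_mul_eq_zero Ybar Y G hG (hYr.trans hrank.symm) hdet, smul_zero]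
end

section
/- Let Ȳ ∈ ℝ^{n1×n2} have rank r. Then V_{Ω^c} ∩ T(Ȳ) = {0} holds if and only if for every left side complement F of Ȳ and every right side complement G of Ȳ, the family of vectors {g_jᵀ ⊗ f_i : (i,j) ∈ Ω^c} is linearly independent in ℝ^{(n2−r)(n1−r)}, where f_i ∈ ℝ^{n1−r} denotes the i-th column of F and g_j ∈ ℝ^{1×(n2−r)} denotes the j-th row of G. -/
/-!
For left and right complements `F`, `G` of `Y`, a matrix `H` lies in the tangent space
`{Q₁ Y + Y Q₂}` iff `F H G = 0`. One direction is immediate. For the other, `ker F` equals the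
column space of `Y` by dimension count, so `F (H G) = 0` gives `H G = Y Z`; with a left inverse `L`
of `G`, `(H - Y Z L) G = 0`, and the transposed dimension count gives `H - Y Z L = Q Y`.

On the other hand `∑ cᵢⱼ gⱼᵀ ⊗ fᵢ` is the vectorization of `F H G`, where `H` has the entries `cᵢⱼ`
on the complement of `Ω` and `0` on `Ω`. So linear independence says exactly that `F H G = 0`
forces `H = 0` for `H` supported off `Ω`. The theorem follows since complements always exist.
-/

/-- Exactness at the middle of `Y` followed by `F`: if `F * Y = 0` and the ranks add up to the
middle dimension, everything killed by `F` factors through `Y`. -/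
lemma exists_eq_mul_of_mul_eq_zero {m n k l : ℕ} (F : Matrix (Fin m) (Fin n) ℝ)
    (Y : Matrix (Fin n) (Fin k) ℝ) (hFY : F * Y = 0) (hr : F.rank + Y.rank = n)
    (M : Matrix (Fin n) (Fin l) ℝ) (hFM : F * M = 0) :
    ∃ Z : Matrix (Fin k) (Fin l) ℝ, M = Y * Z := by
  have hle : LinearMap.range Y.mulVecLin ≤ LinearMap.ker F.mulVecLin := by
    rintro _ ⟨v, rfl⟩
    simp [hFY]
  have hdim := F.mulVecLin.finrank_range_add_finrank_ker
  rw [Module.finrank_fin_fun] at hdim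
  have heq := Submodule.eq_of_le_of_finrank_eq hle (by
    unfold Matrix.rank at hr
    omega)
  have hcol : ∀ j : Fin l, ∃ z : Fin k → ℝ, Y.mulVec z = fun i => M i j := by
    intro j
    have hmem : (fun i => M i j) ∈ LinearMap.ker F.mulVecLin := by
      rw [LinearMap.mem_ker]
      funext a
      exact congrFun (congrFun hFM a) j
    rw [← heq] at hmem
    exact hmem
  choose z hz using hcol
  refine ⟨fun a j => z j a, ?_⟩
  ext i j
  exact (congrFun (hz j) i).symm

lemma exists_left_complement {n k r : ℕ} (Y : Matrix (Fin n) (Fin k) ℝ) (hY : Y.rank = r) :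
    ∃ F : Matrix (Fin (n - r)) (Fin n) ℝ, F.rank = n - r ∧ F * Y = 0 := by
  have hdim := Y.transpose.mulVecLin.finrank_range_add_finrank_ker
  have hYt : Module.finrank ℝ (LinearMap.range Y.transpose.mulVecLin) = r :=
    (Matrix.rank_transpose Y).trans hY
  rw [Module.finrank_fin_fun] at hdim
  have hker : Module.finrank ℝ (LinearMap.ker Y.transpose.mulVecLin) = n - r := by omega
  let b := Module.finBasisOfFinrankEq ℝ _ hker
  refine ⟨Matrix.of fun a => (b a : Fin n → ℝ), ?_, ?_⟩
  · have hli : LinearIndependent ℝ (fun a => (b a : Fin n → ℝ)) :=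
      b.linearIndependent.map' (Submodule.subtype _) (Submodule.ker_subtype _)
    have := LinearIndependent.rank_matrix (M := Matrix.of fun a => (b a : Fin n → ℝ)) hli
    simpa using this
  · ext a j
    have h := congrFun (LinearMap.mem_ker.mp (b a).2) j
    rw [Matrix.mulVecLin_apply, Matrix.mulVec_transpose] at h
    exact h

lemma exists_right_complement {n k r : ℕ} (Y : Matrix (Fin n) (Fin k) ℝ) (hY : Y.rank = r) :
    ∃ G : Matrix (Fin k) (Fin (k - r)) ℝ, G.rank = k - r ∧ Y * G = 0 := by
  obtain ⟨F, hF, hFY⟩ := exists_left_complement Y.transpose ((Matrix.rank_transpose Y).trans hY)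
  refine ⟨F.transpose, (Matrix.rank_transpose F).trans hF, ?_⟩
  simpa using congrArg Matrix.transpose hFY

/-- The tangent space at `Y` is cut out by the equations `F * H * G = 0`. -/
lemma tangent_iff {n1 n2 r : ℕ} (Y : Matrix (Fin n1) (Fin n2) ℝ) (hY : Y.rank = r)
    (F : Matrix (Fin (n1 - r)) (Fin n1) ℝ) (G : Matrix (Fin n2) (Fin (n2 - r)) ℝ)
    (hF : F.rank = n1 - r) (hFY : F * Y = 0) (hG : G.rank = n2 - r) (hYG : Y * G = 0)
    (H : Matrix (Fin n1) (Fin n2) ℝ) :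
    (∃ (Q1 : Matrix (Fin n1) (Fin n1) ℝ) (Q2 : Matrix (Fin n2) (Fin n2) ℝ),
      H = Q1 * Y + Y * Q2) ↔ F * H * G = 0 := by
  have hr1 : r ≤ n1 := hY ▸ Y.rank_le_height
  have hr2 : r ≤ n2 := hY ▸ Y.rank_le_width
  constructor
  · rintro ⟨Q1, Q2, rfl⟩
    rw [Matrix.mul_add, Matrix.add_mul, ← Matrix.mul_assoc F Y, hFY, Matrix.mul_assoc F,
      Matrix.mul_assoc Q1, hYG]
    simp
  · intro h
    obtain ⟨Z, hZ⟩ := exists_eq_mul_of_mul_eq_zero F Y hFY (by omega) (H * G)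
      (by rw [← Matrix.mul_assoc, h])
    -- `Gᵀ` is onto, so it has a right inverse: the exactness lemma with the map to `ℝ⁰`.
    obtain ⟨L, hL⟩ := exists_eq_mul_of_mul_eq_zero
      (0 : Matrix (Fin 0) (Fin (n2 - r)) ℝ) G.transpose (by simp)
      (by rw [Matrix.rank_transpose, hG, Matrix.rank_zero, zero_add]) (1 : Matrix (Fin (n2 - r)) (Fin (n2 - r)) ℝ) (by simp)
    have hLG : L.transpose * G = 1 := by
      simpa using (congrArg Matrix.transpose hL).symm
    have hker : (H - Y * (Z * L.transpose)) * G = 0 := by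
      rw [Matrix.sub_mul, hZ, Matrix.mul_assoc, Matrix.mul_assoc, hLG, Matrix.mul_one, sub_self]
    obtain ⟨Q, hQ⟩ := exists_eq_mul_of_mul_eq_zero G.transpose Y.transpose
      (by rw [← Matrix.transpose_mul, hYG, Matrix.transpose_zero])
      (by rw [Matrix.rank_transpose, Matrix.rank_transpose]; omega)
      (H - Y * (Z * L.transpose)).transpose
      (by rw [← Matrix.transpose_mul, hker, Matrix.transpose_zero])
    refine ⟨Q.transpose, Z * L.transpose, ?_⟩
    have hQ' : H - Y * (Z * L.transpose) = Q.transpose * Y := by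
      simpa using congrArg Matrix.transpose hQ
    rw [← hQ', sub_add_cancel]

/-- Entrywise, `F * H * G` is the linear combination of the Kronecker vectors with the entries of
`H` as coefficients, if `H` vanishes on `Ω`. -/
lemma kronecker_sum {n1 n2 p q : ℕ} (Ω : Finset (Fin n1 × Fin n2))
    (F : Matrix (Fin p) (Fin n1) ℝ) (G : Matrix (Fin n2) (Fin q) ℝ)
    (H : Matrix (Fin n1) (Fin n2) ℝ)
    (hH : ∀ (i : Fin n1) (j : Fin n2), (i, j) ∈ Ω → H i j = 0) (b : Fin q) (a : Fin p) :
    ∑ s : {s : Fin n1 × Fin n2 // s ∉ Ω}, H s.1.1 s.1.2 * (G s.1.2 b * F a s.1.1)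
      = (F * H * G) a b := by
  have h1 : ∑ s : {s : Fin n1 × Fin n2 // s ∉ Ω}, H s.1.1 s.1.2 * (G s.1.2 b * F a s.1.1)
      = ∑ s : Fin n1 × Fin n2, H s.1 s.2 * (G s.2 b * F a s.1) := by
    refine (Finset.sum_subtype (Finset.univ.filter (fun s => s ∉ Ω)) (by simp)
      (fun s : Fin n1 × Fin n2 => H s.1 s.2 * (G s.2 b * F a s.1))).symm.trans ?_
    refine Finset.sum_subset (Finset.filter_subset _ _) fun s _ hs => ?_
    rw [hH s.1 s.2 (by simpa using hs), zero_mul]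
  rw [h1, Fintype.sum_prod_type, Finset.sum_comm]
  simp only [Matrix.mul_apply, Finset.sum_mul]
  exact Finset.sum_congr rfl fun j _ => Finset.sum_congr rfl fun i _ => by ring

/-- Linear independence of the Kronecker vectors: no nonzero `H` vanishing on `Ω` satisfies
`F * H * G = 0`. -/
lemma linearIndependent_iff_mul {n1 n2 p q : ℕ} (Ω : Finset (Fin n1 × Fin n2))
    (F : Matrix (Fin p) (Fin n1) ℝ) (G : Matrix (Fin n2) (Fin q) ℝ) :
    LinearIndependent ℝ
        (fun (s : {s : Fin n1 × Fin n2 // s ∉ Ω}) =>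
          (fun ab : Fin q × Fin p => G s.1.2 ab.1 * F ab.2 s.1.1 : Fin q × Fin p → ℝ)) ↔
      ∀ H : Matrix (Fin n1) (Fin n2) ℝ,
        (∀ (i : Fin n1) (j : Fin n2), (i, j) ∈ Ω → H i j = 0) → F * H * G = 0 → H = 0 := by
  rw [Fintype.linearIndependent_iff]
  constructor
  · intro h H hH hz
    have hc := h (fun s => H s.1.1 s.1.2) (by
      ext ⟨b, a⟩
      simp only [Finset.sum_apply, Pi.smul_apply, smul_eq_mul, Pi.zero_apply]
      rw [kronecker_sum Ω F G H hH, hz, Matrix.zero_apply])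
    ext i j
    by_cases hij : (i, j) ∈ Ω
    · exact hH i j hij
    · exact hc ⟨(i, j), hij⟩
  · intro h c hc s
    let H : Matrix (Fin n1) (Fin n2) ℝ :=
      fun i j => if hij : (i, j) ∈ Ω then 0 else c ⟨(i, j), hij⟩
    have hH : ∀ (i : Fin n1) (j : Fin n2), (i, j) ∈ Ω → H i j = 0 := fun i j hij => dif_pos hij
    have hHc : ∀ s : {s : Fin n1 × Fin n2 // s ∉ Ω}, H s.1.1 s.1.2 = c s := fun s => dif_neg s.2
    have hz : F * H * G = 0 := by
      ext a b
      rw [← kronecker_sum Ω F G H hH]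
      simpa [hHc] using congrFun hc (b, a)
    rw [← hHc s, h H hH hz, Matrix.zero_apply]

/-- The well-posedness condition `V_{Ω^c} ∩ T(Ȳ) = {0}` holds iff for every
left side complement `F` and every right side complement `G` of `Ȳ`, the family of Kronecker
vectors `gⱼᵀ ⊗ fᵢ`, `(i,j) ∈ Ω^c`, is linearly independent in `ℝ^{(n2−r)(n1−r)}`. -/
theorem stmt_3 (n1 n2 r : ℕ) (hn1 : 2 ≤ n1) (hn2 : 2 ≤ n2)
    (Ω : Finset (Fin n1 × Fin n2))
    (Ybar : Matrix (Fin n1) (Fin n2) ℝ) (hrank : Ybar.rank = r) :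
    (∀ H : Matrix (Fin n1) (Fin n2) ℝ,
      (∀ (i : Fin n1) (j : Fin n2), (i, j) ∈ Ω → H i j = 0) →
      (∃ (Q1 : Matrix (Fin n1) (Fin n1) ℝ) (Q2 : Matrix (Fin n2) (Fin n2) ℝ),
        H = Q1 * Ybar + Ybar * Q2) → H = 0)
    ↔
    ∀ (F : Matrix (Fin (n1 - r)) (Fin n1) ℝ) (G : Matrix (Fin n2) (Fin (n2 - r)) ℝ),
      F.rank = n1 - r → F * Ybar = 0 → G.rank = n2 - r → Ybar * G = 0 →
      LinearIndependent ℝ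
        (fun (p : {q : Fin n1 × Fin n2 // q ∉ Ω}) =>
          (fun ab : Fin (n2 - r) × Fin (n1 - r) => G p.1.2 ab.1 * F ab.2 p.1.1 :
            Fin (n2 - r) × Fin (n1 - r) → ℝ)) := by
  constructor
  · intro h F G hF hFY hG hYG
    rw [linearIndependent_iff_mul]
    exact fun H hH hz => h H hH ((tangent_iff Ybar hrank F G hF hFY hG hYG H).mpr hz)
  · intro h H hH hT
    obtain ⟨F, hF, hFY⟩ := exists_left_complement Ybar hrank
    obtain ⟨G, hG, hYG⟩ := exists_right_complement Ybar hrank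
    exact (linearIndependent_iff_mul Ω F G).mp (h F G hF hFY hG hYG) H hH
      ((tangent_iff Ybar hrank F G hF hFY hG hYG H).mp hT)
end

section
/- Let Ω have cardinality m and let Ȳ ∈ ℝ^{n1×n2} have rank r and satisfy V_{Ω^c} ∩ T(Ȳ) = {0}. Then r(n1+n2−r) ≤ m, i.e., well-posedness cannot hold when r > (n1+n2)/2 − sqrt((n1+n2)²/4 − m). -/
/-!
Write `Y = C * R` with `C` of size `n1 × r` having a left inverse `L`, and `R` of size `r × n2` having
a right inverse `S`. Every matrix `A * R + C * B` lies in the tangent space at `Y`, being equal to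
`(A * L) * Y + Y * (S * B)`. If it vanishes and moreover `B * S = 0`, then multiplying
by `S` on the right gives `A = 0`, and multiplying by `L` on the left gives `B = 0`. Hence
well-posedness makes the linear map sending `(A, B)` to the pair formed by the restriction of
`A * R + C * B` to `Ω` and the `r × r` matrix `B * S` injective, and comparing dimensions gives
`n1 * r + r * n2 ≤ m + r * r`.
-/

/-- Rank factorization: a matrix is the product of a left-invertible and a right-invertible matrix
whose inner dimension is its rank. -/
theorem exists_rank_factorization {n1 n2 r : ℕ} (Y : Matrix (Fin n1) (Fin n2) ℝ)
    (hY : Y.rank = r) :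
    ∃ (C : Matrix (Fin n1) (Fin r) ℝ) (R : Matrix (Fin r) (Fin n2) ℝ)
      (L : Matrix (Fin r) (Fin n1) ℝ) (S : Matrix (Fin n2) (Fin r) ℝ),
      Y = C * R ∧ L * C = 1 ∧ R * S = 1 := by
  let f := Matrix.toLin' Y
  have hf : Module.finrank ℝ (LinearMap.range f) = r := hY
  let e : LinearMap.range f ≃ₗ[ℝ] (Fin r → ℝ) :=
    LinearEquiv.ofFinrankEq _ _ (by simp [hf])
  let c : (Fin r → ℝ) →ₗ[ℝ] (Fin n1 → ℝ) := (LinearMap.range f).subtype ∘ₗ e.symm.toLinearMap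
  let ρ : (Fin n2 → ℝ) →ₗ[ℝ] (Fin r → ℝ) := e.toLinearMap ∘ₗ f.rangeRestrict
  have hcρ : c ∘ₗ ρ = f := by
    ext x
    simp [c, ρ]
  have hc : LinearMap.ker c = ⊥ :=
    LinearMap.ker_eq_bot.2 (Subtype.val_injective.comp e.symm.injective)
  have hρ : LinearMap.range ρ = ⊤ :=
    LinearMap.range_eq_top.2 (e.surjective.comp f.surjective_rangeRestrict)
  obtain ⟨l, hl⟩ := c.exists_leftInverse_of_injective hc
  obtain ⟨s, hs⟩ := ρ.exists_rightInverse_of_surjective hρ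
  refine ⟨c.toMatrix', ρ.toMatrix', l.toMatrix', s.toMatrix', ?_, ?_, ?_⟩
  · rw [← LinearMap.toMatrix'_comp, hcρ, LinearMap.toMatrix'_toLin']
  · rw [← LinearMap.toMatrix'_comp, hl, LinearMap.toMatrix'_id]
  · rw [← LinearMap.toMatrix'_comp, hs, LinearMap.toMatrix'_id]

/-- If `Ȳ` has rank `r` and satisfies the well-posedness condition
`V_{Ω^c} ∩ T(Ȳ) = {0}`, then `r(n1+n2−r) ≤ m`. -/
theorem stmt_4 (n1 n2 r m : ℕ) (hn1 : 2 ≤ n1) (hn2 : 2 ≤ n2)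
    (Ω : Finset (Fin n1 × Fin n2)) (hΩ : Ω.card = m)
    (Ybar : Matrix (Fin n1) (Fin n2) ℝ) (hrank : Ybar.rank = r)
    (hwp : ∀ H : Matrix (Fin n1) (Fin n2) ℝ,
      (∀ (i : Fin n1) (j : Fin n2), (i, j) ∈ Ω → H i j = 0) →
      (∃ (Q1 : Matrix (Fin n1) (Fin n1) ℝ) (Q2 : Matrix (Fin n2) (Fin n2) ℝ),
        H = Q1 * Ybar + Ybar * Q2) → H = 0) :
    r * (n1 + n2 - r) ≤ m := by
  obtain ⟨C, R, L, S, hY, hLC, hRS⟩ := exists_rank_factorization Ybar hrank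
  let φ : (Matrix (Fin n1) (Fin r) ℝ × Matrix (Fin r) (Fin n2) ℝ) →ₗ[ℝ]
      ((Ω → ℝ) × Matrix (Fin r) (Fin r) ℝ) :=
    { toFun := fun p => (fun x => (p.1 * R + C * p.2) x.1.1 x.1.2, p.2 * S)
      map_add' := fun p q => by
        ext1
        · funext x
          simp only [Prod.fst_add, Prod.snd_add, Matrix.add_mul, Matrix.mul_add,
            Matrix.add_apply, Pi.add_apply]
          ring
        · simp [Matrix.add_mul]
      map_smul' := fun a p => by
        ext1
        · funext x
          simp [mul_add]
        · simp }
  have hφ : Function.Injective φ := by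
    rw [injective_iff_map_eq_zero]
    rintro ⟨A, B⟩ h
    obtain ⟨h1, hBS⟩ := Prod.ext_iff.1 h
    change B * S = 0 at hBS
    have h0 : A * R + C * B = 0 := by
      refine hwp _ (fun i j hij => congrFun h1 ⟨(i, j), hij⟩) ⟨A * L, S * B, ?_⟩
      rw [hY, Matrix.mul_assoc A, ← Matrix.mul_assoc L, hLC, Matrix.one_mul,
        Matrix.mul_assoc C, ← Matrix.mul_assoc R, hRS, Matrix.one_mul]
    have hA : A = 0 := by
      have := congrArg (· * S) h0
      simpa [Matrix.add_mul, Matrix.mul_assoc, hRS, hBS] using this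
    have hB : B = 0 := by
      have := congrArg (L * ·) h0
      simpa [hA, ← Matrix.mul_assoc, hLC] using this
    rw [hA, hB]
    rfl
  have hdim := LinearMap.finrank_le_finrank_of_injective hφ
  simp only [Module.finrank_prod, Module.finrank_matrix, Module.finrank_fintype_fun_eq_card,
    Fintype.card_fin, Fintype.card_coe, Module.finrank_self, mul_one, hΩ] at hdim
  rw [Nat.mul_sub, Nat.mul_add]
  have := Nat.mul_comm n1 r
  omega
end

section
/- Let Ȳ ∈ ℝ^{n1×n2} have rank r and satisfy V_{Ω^c} ∩ T(Ȳ) = {0} (well-posedness). Then every row and every column of the pattern contains at least r observed indices: for every i ∈ {1,…,n1} the set {j : (i,j) ∈ Ω} has cardinality at least r, and for every j ∈ {1,…,n2} the set {i : (i,j) ∈ Ω} has cardinality at least r. -/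
/-!
If row `i` had fewer than `r` observed indices, the `r`-dimensional row space of `Ybar` would
contain a nonzero vector `w ᵥ* Ybar` vanishing at all of them, by counting dimensions
(`exists_mulVec_ne_zero_of_card_lt_rank`, applied to the transpose). The matrix with this vector
as row `i` and zeros elsewhere vanishes on `Ω` and equals `(eᵢ wᵀ) * Ybar`, so it is a nonzero
element of `V_{Ω^c} ∩ T(Ybar)`. Columns are symmetric, with `Ybar * (w eⱼᵀ)`.
-/

/-- Fewer than `A.rank` coordinate conditions leave a nonzero vector in the column space. -/
theorem exists_mulVec_ne_zero_of_card_lt_rank {m n : ℕ} (A : Matrix (Fin m) (Fin n) ℝ)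
    (S : Finset (Fin m)) (hS : S.card < A.rank) :
    ∃ w : Fin n → ℝ, A.mulVec w ≠ 0 ∧ ∀ i ∈ S, A.mulVec w i = 0 := by
  let f : LinearMap.range A.mulVecLin →ₗ[ℝ] (S → ℝ) :=
    (LinearMap.funLeft ℝ ℝ (Subtype.val : S → Fin m)).comp (LinearMap.range A.mulVecLin).subtype
  have hf : LinearMap.ker f ≠ ⊥ := by
    apply LinearMap.ker_ne_bot_of_finrank_lt
    simpa [Matrix.rank] using hS
  obtain ⟨⟨_, w, rfl⟩, hv, hv0⟩ := Submodule.exists_mem_ne_zero_of_ne_bot hf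
  refine ⟨w, fun h => hv0 (Subtype.ext h), fun i hi => ?_⟩
  exact congrFun (LinearMap.mem_ker.mp hv) ⟨i, hi⟩


/-- If `Ȳ` has rank `r` and is well-posed (`V_{Ω^c} ∩ T(Ȳ) = {0}`), then every
row and every column of the pattern `Ω` contains at least `r` observed indices. -/
theorem stmt_5 (n1 n2 r : ℕ) (hn1 : 2 ≤ n1) (hn2 : 2 ≤ n2)
    (Ω : Finset (Fin n1 × Fin n2))
    (Ybar : Matrix (Fin n1) (Fin n2) ℝ) (hrank : Ybar.rank = r)
    (hwp : ∀ H : Matrix (Fin n1) (Fin n2) ℝ,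
      (∀ (i : Fin n1) (j : Fin n2), (i, j) ∈ Ω → H i j = 0) →
      (∃ (Q1 : Matrix (Fin n1) (Fin n1) ℝ) (Q2 : Matrix (Fin n2) (Fin n2) ℝ),
        H = Q1 * Ybar + Ybar * Q2) → H = 0) :
    (∀ i : Fin n1, r ≤ (Finset.univ.filter (fun j : Fin n2 => (i, j) ∈ Ω)).card) ∧
    (∀ j : Fin n2, r ≤ (Finset.univ.filter (fun i : Fin n1 => (i, j) ∈ Ω)).card) := by
  constructor
  · intro i
    by_contra! hlt
    rw [← hrank, ← Matrix.rank_transpose Ybar] at hlt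
    obtain ⟨w, hw0, hw⟩ := exists_mulVec_ne_zero_of_card_lt_rank _ _ hlt
    rw [Matrix.mulVec_transpose] at hw0 hw
    have hH := hwp (Matrix.vecMulVec (Pi.single i 1) (Matrix.vecMul w Ybar)) ?_
      ⟨Matrix.vecMulVec (Pi.single i 1) w, 0, by simp [Matrix.vecMulVec_mul]⟩
    · apply hw0
      ext j
      simpa [Matrix.vecMulVec_apply] using congrFun (congrFun hH i) j
    · intro i' j hij
      by_cases h : i' = i
      · subst h
        simp [Matrix.vecMulVec_apply, hw j (by simpa using hij)]
      · simp [Matrix.vecMulVec_apply, h]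
  · intro j
    by_contra! hlt
    rw [← hrank] at hlt
    obtain ⟨w, hw0, hw⟩ := exists_mulVec_ne_zero_of_card_lt_rank _ _ hlt
    have hH := hwp (Matrix.vecMulVec (Matrix.mulVec Ybar w) (Pi.single j 1)) ?_
      ⟨0, Matrix.vecMulVec w (Pi.single j 1), by simp [Matrix.mul_vecMulVec]⟩
    · apply hw0
      ext i
      simpa [Matrix.vecMulVec_apply] using congrFun (congrFun hH i) j
    · intro i j' hij
      by_cases h : j' = j
      · subst h
        simp [Matrix.vecMulVec_apply, hw i (by simpa using hij)]
      · simp [Matrix.vecMulVec_apply, h]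
end

section
/- Let Y ∈ ℝ^{n1×n2} have rank r, let F be a left side complement of Y and G a right side complement of Y. Then the two descriptions of the tangent space coincide: {Q1 Y + Y Q2 : Q1 ∈ ℝ^{n1×n1}, Q2 ∈ ℝ^{n2×n2}} = {H ∈ ℝ^{n1×n2} : F H G = 0}. -/
/-!
If `A * B = 0` and the ranks of `A` and `B` add up to the middle dimension, then the range of `B`
is the whole kernel of `A`, so every `X` with `A * X = 0` factors through `B`
(`exists_eq_mul_of_mul_eq_zero`).

One inclusion is immediate from `F * Y = 0` and `Y * G = 0`. For the other, `F * (H * G) = 0` gives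
`H * G = Y * Z`. Since `G` has full column rank it has a left inverse `Lᵀ`, and then
`H - Y * Z * Lᵀ` is annihilated by `G` on the right. The transposed factorization, through the pair
`(Gᵀ, Yᵀ)`, writes this difference as `Wᵀ * Y`, so `H = Wᵀ * Y + Y * (Z * Lᵀ)`.
-/

/-- Exactness at the middle term, by a dimension count: a matrix killed by `A` factors through
`B`. -/
lemma exists_eq_mul_of_mul_eq_zero_s6 {a b c d : ℕ} {A : Matrix (Fin a) (Fin b) ℝ}
    {B : Matrix (Fin b) (Fin c) ℝ} (hAB : A * B = 0) (hr : A.rank + B.rank = b)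
    {X : Matrix (Fin b) (Fin d) ℝ} (hX : A * X = 0) :
    ∃ Z : Matrix (Fin c) (Fin d) ℝ, X = B * Z := by
  have hle : LinearMap.range B.mulVecLin ≤ LinearMap.ker A.mulVecLin := by
    rintro _ ⟨v, rfl⟩
    simp [Matrix.mulVec_mulVec, hAB]
  have hdim := A.mulVecLin.finrank_range_add_finrank_ker
  rw [Module.finrank_fin_fun] at hdim
  have heq : LinearMap.range B.mulVecLin = LinearMap.ker A.mulVecLin := by
    apply Submodule.eq_of_le_of_finrank_eq hle
    unfold Matrix.rank at hr
    omega
  have hcol : ∀ j, ∃ z, B.mulVec z = X.col j := by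
    intro j
    have hj : X.col j ∈ LinearMap.ker A.mulVecLin := by
      rw [LinearMap.mem_ker]
      ext i
      exact congrFun (congrFun hX i) j
    rw [← heq] at hj
    exact hj
  choose z hz using hcol
  refine ⟨Matrix.of fun i j => z j i, ?_⟩
  ext i j
  exact (congrFun (hz j) i).symm


/-- For `Y` of rank `r`, a left side complement `F` and a right side complement
`G` of `Y`, the two descriptions of the tangent space coincide:
`{Q1 Y + Y Q2} = {H : F H G = 0}`. -/
theorem stmt_6 (n1 n2 r : ℕ) (hn1 : 2 ≤ n1) (hn2 : 2 ≤ n2)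
    (Y : Matrix (Fin n1) (Fin n2) ℝ) (hrank : Y.rank = r)
    (F : Matrix (Fin (n1 - r)) (Fin n1) ℝ) (G : Matrix (Fin n2) (Fin (n2 - r)) ℝ)
    (hF : F.rank = n1 - r) (hFY : F * Y = 0)
    (hG : G.rank = n2 - r) (hYG : Y * G = 0) :
    {H : Matrix (Fin n1) (Fin n2) ℝ |
      ∃ (Q1 : Matrix (Fin n1) (Fin n1) ℝ) (Q2 : Matrix (Fin n2) (Fin n2) ℝ),
        H = Q1 * Y + Y * Q2} =
    {H : Matrix (Fin n1) (Fin n2) ℝ | F * H * G = 0} := by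
  have h1 : r ≤ n1 := by simpa [hrank] using Y.rank_le_height
  have h2 : r ≤ n2 := by simpa [hrank] using Y.rank_le_width
  ext H
  simp only [Set.mem_ofPred_eq]
  constructor
  · rintro ⟨Q1, Q2, rfl⟩
    rw [Matrix.mul_add, Matrix.add_mul, ← Matrix.mul_assoc F Y, hFY, Matrix.mul_assoc F,
      Matrix.mul_assoc Q1, hYG]
    simp
  · intro hH
    obtain ⟨Z, hZ⟩ := exists_eq_mul_of_mul_eq_zero_s6 hFY (by rw [hF, hrank]; omega)
      (show F * (H * G) = 0 by rw [← Matrix.mul_assoc, hH])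
    -- `Gᵀ` has full row rank, so exactness against the empty matrix gives a right inverse of it.
    obtain ⟨L, hL⟩ := exists_eq_mul_of_mul_eq_zero_s6 (A := (0 : Matrix (Fin 0) (Fin (n2 - r)) ℝ))
      (B := G.transpose) (by simp) (by rw [Matrix.rank_transpose, hG]; simp)
      (X := (1 : Matrix (Fin (n2 - r)) (Fin (n2 - r)) ℝ)) (by simp)
    have hLG : L.transpose * G = 1 := by
      simpa [Matrix.transpose_mul] using (congrArg Matrix.transpose hL).symm
    have hK : (H - Y * (Z * L.transpose)) * G = 0 := by
      rw [Matrix.sub_mul, hZ, Matrix.mul_assoc, Matrix.mul_assoc, hLG, Matrix.mul_one, sub_self]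
    obtain ⟨W, hW⟩ := exists_eq_mul_of_mul_eq_zero_s6 (A := G.transpose) (B := Y.transpose)
      (by rw [← Matrix.transpose_mul, hYG, Matrix.transpose_zero])
      (by rw [Matrix.rank_transpose, Matrix.rank_transpose, hG, hrank]; omega)
      (X := (H - Y * (Z * L.transpose)).transpose)
      (by rw [← Matrix.transpose_mul, hK, Matrix.transpose_zero])
    refine ⟨W.transpose, Z * L.transpose, ?_⟩
    have hW' : H - Y * (Z * L.transpose) = W.transpose * Y := by
      simpa [Matrix.transpose_mul] using congrArg Matrix.transpose hW
    rw [← hW', sub_add_cancel]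
end

section
/- Let Ȳ ∈ ℝ^{n1×n2} have rank r. Then V_{Ω^c} ∩ T(Ȳ) = {0} holds if and only if V_Ω + N(Ȳ) = ℝ^{n1×n2}, where N(Ȳ) = {Z ∈ ℝ^{n1×n2} : Zᵀ Ȳ = 0 and Ȳ Zᵀ = 0}. -/
/-!
The condition `Zᵀ Y = 0`, `Y Zᵀ = 0` says exactly that `Z` is orthogonal to `T(Y)` for the Frobenius
pairing `⟨H, A⟩ = tr (Hᵀ A)`: by cyclicity of the trace, `tr (Zᵀ (Q₁ Y + Y Q₂))` is
`tr (Y Zᵀ Q₁) + tr (Zᵀ Y Q₂)`. So `N(Y) = T(Y)^⊥`, while `V_Ω = (V_{Ω^c})^⊥`, and the theorem is the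
duality `(V ∩ T)^⊥ = V^⊥ + T^⊥` in finite dimension.

If `V_Ω + N(Y)` is everything, an `H` in the intersection is orthogonal to both summands, hence to
itself (`trace_tangent_eq_zero`). If it is a proper subspace, some nonzero `H` is orthogonal to it
(`exists_trace_separating`); then `H` vanishes on `Ω`, and `H ∈ T(Y)` because
`N(Y)^⊥ = T(Y)^⊥⊥ = T(Y)` (`mem_tangentSpace_of_orthogonal`).
-/

open scoped Matrix

section Duality

variable {m n : Type*} [Fintype m] [Fintype n]

/-- The matrices whose entries vanish outside `S`. -/
def supportedOn (S : Set (m × n)) : Submodule ℝ (Matrix m n ℝ) where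
  carrier := {B | ∀ i j, (i, j) ∉ S → B i j = 0}
  add_mem' := by
    intro A B hA hB i j h
    simp [hA i j h, hB i j h]
  zero_mem' := by simp
  smul_mem' := by
    intro c A hA i j h
    simp [hA i j h]

/-- The space `N(Y)` of matrices `Z` with `Zᵀ Y = 0` and `Y Zᵀ = 0`. -/
def normalSpace (Y : Matrix m n ℝ) : Submodule ℝ (Matrix m n ℝ) where
  carrier := {Z | Zᵀ * Y = 0 ∧ Y * Zᵀ = 0}
  add_mem' := by
    rintro A B ⟨h1, h2⟩ ⟨h3, h4⟩
    simp [Matrix.add_mul, Matrix.mul_add, h1, h2, h3, h4]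
  zero_mem' := by simp
  smul_mem' := by
    rintro c A ⟨h1, h2⟩
    simp [h1, h2]

/-- The space `T(Y)` of matrices of the form `Q₁ Y + Y Q₂`. -/
def tangentSpace (Y : Matrix m n ℝ) : Submodule ℝ (Matrix m n ℝ) where
  carrier := {H | ∃ (Q1 : Matrix m m ℝ) (Q2 : Matrix n n ℝ), H = Q1 * Y + Y * Q2}
  add_mem' := by
    rintro _ _ ⟨P1, P2, rfl⟩ ⟨Q1, Q2, rfl⟩
    refine ⟨P1 + Q1, P2 + Q2, ?_⟩
    rw [Matrix.add_mul, Matrix.mul_add]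
    abel
  zero_mem' := ⟨0, 0, by simp⟩
  smul_mem' := by
    rintro c _ ⟨Q1, Q2, rfl⟩
    exact ⟨c • Q1, c • Q2, by simp⟩

/-- A point outside a subspace is separated from it by the Frobenius pairing with some matrix,
since every linear functional on matrices is such a pairing. -/
lemma exists_trace_separating {W : Submodule ℝ (Matrix m n ℝ)} {X : Matrix m n ℝ} (hX : X ∉ W) :
    ∃ H : Matrix m n ℝ, (∀ A ∈ W, (Hᵀ * A).trace = 0) ∧ (Hᵀ * X).trace ≠ 0 := by
  classical
  obtain ⟨f, hfX, hf⟩ := Submodule.exists_le_ker_of_notMem hX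
  have key : ∀ A, ((Matrix.of fun i j => f (Matrix.single i j 1))ᵀ * A).trace = f A := by
    intro A
    conv_rhs => rw [Matrix.matrix_eq_sum_single A]
    simp only [map_sum, Matrix.trace, Matrix.diag, Matrix.mul_apply, Matrix.transpose_apply,
      Matrix.of_apply]
    rw [Finset.sum_comm]
    refine Finset.sum_congr rfl fun i _ => Finset.sum_congr rfl fun j _ => ?_
    rw [← mul_one (A i j), ← smul_eq_mul (A i j) 1, ← Matrix.smul_single, map_smul]
    simp [mul_comm]
  refine ⟨Matrix.of fun i j => f (Matrix.single i j 1), fun A hA => ?_, ?_⟩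
  · rw [key]
    exact hf hA
  · rwa [key]

lemma trace_transpose_mul_comm (A B : Matrix m n ℝ) : (Aᵀ * B).trace = (Bᵀ * A).trace := by
  rw [← Matrix.trace_transpose, Matrix.transpose_mul, Matrix.transpose_transpose]

lemma trace_tangent_eq_zero {Y Z H : Matrix m n ℝ} (hZ : Z ∈ normalSpace Y)
    (hH : H ∈ tangentSpace Y) : (Zᵀ * H).trace = 0 := by
  obtain ⟨Q1, Q2, rfl⟩ := hH
  obtain ⟨h1, h2⟩ := hZ
  rw [Matrix.mul_add, Matrix.trace_add, ← Matrix.mul_assoc, ← Matrix.mul_assoc, h1,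
    Matrix.trace_mul_cycle, h2]
  simp

/-- `T(Y)^⊥ ⊆ N(Y)`: test against all `Q₁ Y` and all `Y Q₂`. -/
lemma mem_normalSpace_of_orthogonal {Y Z : Matrix m n ℝ}
    (h : ∀ H ∈ tangentSpace Y, (Zᵀ * H).trace = 0) : Z ∈ normalSpace Y := by
  constructor
  · rw [Matrix.ext_iff_trace_mul_right]
    intro Q
    rw [Matrix.mul_assoc, h _ ⟨0, Q, by simp⟩]
    simp
  · rw [Matrix.ext_iff_trace_mul_right]
    intro Q
    rw [← Matrix.trace_mul_cycle, Matrix.mul_assoc, h _ ⟨Q, 0, by simp⟩]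
    simp

/-- `N(Y)^⊥ ⊆ T(Y)`. -/
lemma mem_tangentSpace_of_orthogonal {Y H : Matrix m n ℝ}
    (h : ∀ Z ∈ normalSpace Y, (Hᵀ * Z).trace = 0) : H ∈ tangentSpace Y := by
  by_contra hH
  obtain ⟨K, hK, hKH⟩ := exists_trace_separating hH
  exact hKH (trace_transpose_mul_comm K H ▸ h K (mem_normalSpace_of_orthogonal hK))

end Duality

/-- For `Ȳ` of rank `r`, the well-posedness condition `V_{Ω^c} ∩ T(Ȳ) = {0}`
holds iff `V_Ω + N(Ȳ) = ℝ^{n1×n2}`, where `N(Ȳ) = {Z : Zᵀ Ȳ = 0 and Ȳ Zᵀ = 0}`. -/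
theorem stmt_8 (n1 n2 r : ℕ) (hn1 : 2 ≤ n1) (hn2 : 2 ≤ n2)
    (Ω : Finset (Fin n1 × Fin n2))
    (Ybar : Matrix (Fin n1) (Fin n2) ℝ) (hrank : Ybar.rank = r) :
    (∀ H : Matrix (Fin n1) (Fin n2) ℝ,
      (∀ (i : Fin n1) (j : Fin n2), (i, j) ∈ Ω → H i j = 0) →
      (∃ (Q1 : Matrix (Fin n1) (Fin n1) ℝ) (Q2 : Matrix (Fin n2) (Fin n2) ℝ),
        H = Q1 * Ybar + Ybar * Q2) → H = 0)
    ↔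
    (∀ A : Matrix (Fin n1) (Fin n2) ℝ,
      ∃ B C : Matrix (Fin n1) (Fin n2) ℝ,
        (∀ (i : Fin n1) (j : Fin n2), (i, j) ∉ Ω → B i j = 0) ∧
        Cᵀ * Ybar = 0 ∧ Ybar * Cᵀ = 0 ∧ A = B + C) := by
  constructor
  · intro h A
    have hA : A ∈ supportedOn (Ω : Set (Fin n1 × Fin n2)) ⊔ normalSpace Ybar := by
      by_contra hA
      obtain ⟨H, hW, hHA⟩ := exists_trace_separating hA
      have hHT : H ∈ tangentSpace Ybar :=
        mem_tangentSpace_of_orthogonal fun Z hZ => hW Z (Submodule.mem_sup_right hZ)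
      have hHΩ : ∀ (i : Fin n1) (j : Fin n2), (i, j) ∈ Ω → H i j = 0 := by
        intro i j hij
        have hmem : Matrix.single i j (1 : ℝ) ∈ supportedOn (Ω : Set (Fin n1 × Fin n2)) := by
          intro i' j' h'
          refine Matrix.single_apply_of_ne _ _ _ _ _ ?_
          rintro ⟨rfl, rfl⟩
          exact h' hij
        have := hW _ (Submodule.mem_sup_left hmem)
        simpa [Matrix.trace_mul_single] using this
      refine hHA ?_
      rw [h H hHΩ hHT]
      simp
    obtain ⟨B, hB, C, hC, rfl⟩ := Submodule.mem_sup.1 hA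
    exact ⟨B, C, fun i j hij => hB i j (by simpa using hij), hC.1, hC.2, rfl⟩
  · intro h H hHΩ hHT
    obtain ⟨B, C, hB, hC1, hC2, hH⟩ := h H
    have hBH : (Bᵀ * H).trace = 0 := by
      simp only [Matrix.trace, Matrix.diag, Matrix.mul_apply, Matrix.transpose_apply]
      refine Finset.sum_eq_zero fun j _ => Finset.sum_eq_zero fun i _ => ?_
      by_cases hij : (i, j) ∈ Ω
      · rw [hHΩ i j hij, mul_zero]
      · rw [hB i j hij, zero_mul]
    have hHH : (Hᵀ * H).trace = 0 := by
      conv_lhs => rw [hH, Matrix.transpose_add, Matrix.add_mul, ← hH, Matrix.trace_add]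
      rw [hBH, trace_tangent_eq_zero ⟨hC1, hC2⟩ hHT, add_zero]
    rw [← Matrix.conjTranspose_eq_transpose_of_trivial] at hHH
    exact Matrix.trace_conjTranspose_mul_self_eq_zero_iff.1 hHH
end

section
/- Let (k,l) ∈ Ω^c and suppose: (i) there exist index sets I1 ⊆ {1,…,n1}\{k} and I2 ⊆ {1,…,n2}\{l} with |I1| = |I2| = r such that I1×I2 ⊆ Ω, {k}×I2 ⊆ Ω, and I1×{l} ⊆ Ω; (ii) the r×r submatrix of M with rows indexed by I1 and columns indexed by I2 is nonsingular. Then: (a) every matrix Y with P_Ω(Y) = M has rank at least r; (b) for any two matrices Y and Ȳ, each of rank r and each satisfying P_Ω(Y) = M and P_Ω(Ȳ) = M, one has Y_{kl} = Ȳ_{kl}. -/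
/-!
A completion `Y` of rank `r` whose `r × r` block `A = Y[I1, I2]` is invertible has all its
`(r + 1) × (r + 1)` minors equal to zero. For the minor bordering `A` by row `k` and column `l`,
the Schur complement formula reads `det A * (Y k l - Y[k, I2] * A⁻¹ * Y[I1, l]) = 0`, so `Y k l`
is determined by entries that are all observed. The lower bound on the rank is the fact that
the rank of a submatrix does not exceed the rank of the matrix.
-/

/-- Schur complement formula for an entry of a matrix of rank at most `r` in terms of an invertible
`r × r` block: the minor bordering the block by row `k` and column `l` vanishes. -/
theorem entry_eq_of_rank_le {n1 n2 r : ℕ} (Y : Matrix (Fin n1) (Fin n2) ℝ)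
    (k : Fin n1) (l : Fin n2) (e1 : Fin r → Fin n1) (e2 : Fin r → Fin n2)
    (hdet : (Y.submatrix e1 e2).det ≠ 0) (hr : Y.rank ≤ r) :
    Y k l = (Y.submatrix (fun _ : Unit => k) e2 * (Y.submatrix e1 e2)⁻¹ *
      Y.submatrix e1 (fun _ : Unit => l)) () () := by
  have hblocks : Y.submatrix (Sum.elim e1 fun _ : Unit => k) (Sum.elim e2 fun _ : Unit => l) =
      Matrix.fromBlocks (Y.submatrix e1 e2) (Y.submatrix e1 fun _ : Unit => l)
        (Y.submatrix (fun _ : Unit => k) e2)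
        (Y.submatrix (fun _ : Unit => k) fun _ : Unit => l) := by
    ext (i | i) (j | j) <;> rfl
  have hzero : (Y.submatrix (Sum.elim e1 fun _ : Unit => k)
      (Sum.elim e2 fun _ : Unit => l)).det = 0 := by
    by_contra h
    have h1 := Matrix.rank_of_isUnit _
      ((Matrix.isUnit_iff_isUnit_det _).2 (isUnit_iff_ne_zero.2 h))
    have h2 := Matrix.rank_submatrix_le Y (Sum.elim e1 fun _ : Unit => k)
      (Sum.elim e2 fun _ : Unit => l)
    simp only [Fintype.card_sum, Fintype.card_fin, Fintype.card_unit] at h1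
    omega
  let := Matrix.invertibleOfIsUnitDet _ (isUnit_iff_ne_zero.2 hdet)
  rw [hblocks, Matrix.det_fromBlocks₁₁, Matrix.invOf_eq_nonsing_inv] at hzero
  have h := (mul_eq_zero.1 hzero).resolve_left hdet
  rw [Matrix.det_unique, Matrix.sub_apply] at h
  exact sub_eq_zero.1 h

/-- If for an unobserved index `(k,l)` there are index sets `I1, I2` of
cardinality `r` (encoded by injective enumerations `e1, e2` avoiding `k` resp. `l`) with
`I1×I2 ⊆ Ω`, `{k}×I2 ⊆ Ω`, `I1×{l} ⊆ Ω`, and the corresponding `r×r` submatrix of `M`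
nonsingular, then (a) every completion of `M` has rank at least `r`, and (b) all rank-`r`
completions of `M` agree at the entry `(k,l)`. -/
theorem stmt_10 (n1 n2 r : ℕ) (hn1 : 2 ≤ n1) (hn2 : 2 ≤ n2)
    (Ω : Finset (Fin n1 × Fin n2)) (M : Matrix (Fin n1) (Fin n2) ℝ)
    (hMsupp : ∀ (i : Fin n1) (j : Fin n2), (i, j) ∉ Ω → M i j = 0)
    (k : Fin n1) (l : Fin n2) (hkl : (k, l) ∉ Ω)
    (e1 : Fin r → Fin n1) (e2 : Fin r → Fin n2)
    (he1 : Function.Injective e1) (he2 : Function.Injective e2)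
    (he1k : ∀ a, e1 a ≠ k) (he2l : ∀ b, e2 b ≠ l)
    (hI12 : ∀ a b, (e1 a, e2 b) ∈ Ω)
    (hkI2 : ∀ b, (k, e2 b) ∈ Ω) (hI1l : ∀ a, (e1 a, l) ∈ Ω)
    (hns : (M.submatrix e1 e2).det ≠ 0) :
    (∀ Y : Matrix (Fin n1) (Fin n2) ℝ,
      (∀ (i : Fin n1) (j : Fin n2), (i, j) ∈ Ω → Y i j = M i j) → r ≤ Y.rank) ∧
    (∀ Y Ybar : Matrix (Fin n1) (Fin n2) ℝ,
      Y.rank = r → Ybar.rank = r →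
      (∀ (i : Fin n1) (j : Fin n2), (i, j) ∈ Ω → Y i j = M i j) →
      (∀ (i : Fin n1) (j : Fin n2), (i, j) ∈ Ω → Ybar i j = M i j) →
      Y k l = Ybar k l) := by
  have hsub : ∀ Y : Matrix (Fin n1) (Fin n2) ℝ,
      (∀ (i : Fin n1) (j : Fin n2), (i, j) ∈ Ω → Y i j = M i j) →
      Y.submatrix e1 e2 = M.submatrix e1 e2 := by
    intro Y hY
    ext a b
    exact hY _ _ (hI12 a b)
  refine ⟨fun Y hY => ?_, fun Y Ybar hYr hYbarr hY hYbar => ?_⟩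
  · have h := Matrix.rank_submatrix_le Y e1 e2
    rwa [hsub Y hY, Matrix.rank_of_isUnit _
      ((Matrix.isUnit_iff_isUnit_det _).2 (isUnit_iff_ne_zero.2 hns)), Fintype.card_fin] at h
  · have hrow : Y.submatrix (fun _ : Unit => k) e2 = Ybar.submatrix (fun _ : Unit => k) e2 := by
      ext _ b
      exact (hY _ _ (hkI2 b)).trans (hYbar _ _ (hkI2 b)).symm
    have hcol : Y.submatrix e1 (fun _ : Unit => l) = Ybar.submatrix e1 (fun _ : Unit => l) := by
      ext a _
      exact (hY _ _ (hI1l a)).trans (hYbar _ _ (hI1l a)).symm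
    rw [entry_eq_of_rank_le Y k l e1 e2 (by rwa [hsub Y hY]) hYr.le,
      entry_eq_of_rank_le Ybar k l e1 e2 (by rwa [hsub Ybar hYbar]) hYbarr.le,
      hsub Y hY, hsub Ybar hYbar, hrow, hcol]
end

section
/- Suppose that for every unobserved index (k,l) ∈ Ω^c there exist index sets I1 ⊆ {1,…,n1}\{k} and I2 ⊆ {1,…,n2}\{l} with |I1| = |I2| = r such that I1×I2 ⊆ Ω, {k}×I2 ⊆ Ω, I1×{l} ⊆ Ω, and the r×r submatrix of M with rows I1 and columns I2 is nonsingular. Then the rank-r completion is globally unique: any two matrices Y and Ȳ of rank r with P_Ω(Y) = M and P_Ω(Ȳ) = M are equal. -/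
/-!
If an `r × r` submatrix of a rank-`r` matrix `Y` with rows `e1` is nonsingular, the rows `e1` of `Y`
are linearly independent, hence a basis of the row space. So row `k` is a combination of them, and
the coefficients are determined by the entries of row `k` in the columns of the submatrix. For an
unobserved `(k, l)` all these entries, and those of column `l` in the rows `e1`, are observed, so two
rank-`r` completions use the same coefficients and agree at `(k, l)`.
-/

/-- The rows through a nonsingular `r × r` submatrix of a rank-`r` matrix span its row space. -/
lemma exists_row_eq_vecMul {n1 n2 r : ℕ} (Y : Matrix (Fin n1) (Fin n2) ℝ) (hY : Y.rank = r)
    (e1 : Fin r → Fin n1) (e2 : Fin r → Fin n2) (hdet : (Y.submatrix e1 e2).det ≠ 0)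
    (k : Fin n1) : ∃ c : Fin r → ℝ, ∀ j, Y k j = ∑ a, c a * Y (e1 a) j := by
  have hli' : LinearIndependent ℝ (Y.submatrix e1 e2).row :=
    Matrix.linearIndependent_rows_iff_isUnit.2
      ((Matrix.isUnit_iff_isUnit_det _).2 (isUnit_iff_ne_zero.2 hdet))
  have hli : LinearIndependent ℝ (fun a => Y.row (e1 a)) :=
    LinearIndependent.of_comp (LinearMap.funLeft ℝ ℝ e2) hli'
  have hle : Submodule.span ℝ (Set.range fun a => Y.row (e1 a)) ≤
      Submodule.span ℝ (Set.range Y.row) := by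
    apply Submodule.span_mono
    rintro _ ⟨a, rfl⟩
    exact ⟨e1 a, rfl⟩
  have heq := Submodule.eq_of_le_of_finrank_eq hle (by
    rw [finrank_span_eq_card hli, ← Matrix.rank_eq_finrank_span_row, hY, Fintype.card_fin])
  have hk : Y.row k ∈ Submodule.span ℝ (Set.range fun a => Y.row (e1 a)) := by
    rw [heq]
    exact Submodule.subset_span ⟨k, rfl⟩
  obtain ⟨c, hc⟩ := (Submodule.mem_span_range_iff_exists_fun ℝ).1 hk
  refine ⟨c, fun j => ?_⟩
  have := congrFun hc j
  simpa [Matrix.row] using this.symm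

/-- If for every unobserved index `(k,l) ∉ Ω` there are index sets `I1, I2` of
cardinality `r` (encoded by injective enumerations `e1, e2` avoiding `k` resp. `l`) with
`I1×I2 ⊆ Ω`, `{k}×I2 ⊆ Ω`, `I1×{l} ⊆ Ω`, and the corresponding `r×r` submatrix of `M`
nonsingular, then any two rank-`r` completions of `M` are equal. -/
theorem stmt_11 (n1 n2 r : ℕ) (hn1 : 2 ≤ n1) (hn2 : 2 ≤ n2)
    (Ω : Finset (Fin n1 × Fin n2)) (M : Matrix (Fin n1) (Fin n2) ℝ)
    (hMsupp : ∀ (i : Fin n1) (j : Fin n2), (i, j) ∉ Ω → M i j = 0)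
    (hassump : ∀ (k : Fin n1) (l : Fin n2), (k, l) ∉ Ω →
      ∃ (e1 : Fin r → Fin n1) (e2 : Fin r → Fin n2),
        Function.Injective e1 ∧ Function.Injective e2 ∧
        (∀ a, e1 a ≠ k) ∧ (∀ b, e2 b ≠ l) ∧
        (∀ a b, (e1 a, e2 b) ∈ Ω) ∧
        (∀ b, (k, e2 b) ∈ Ω) ∧ (∀ a, (e1 a, l) ∈ Ω) ∧
        (M.submatrix e1 e2).det ≠ 0)
    (Y Ybar : Matrix (Fin n1) (Fin n2) ℝ)
    (hY : Y.rank = r) (hYbar : Ybar.rank = r)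
    (hYf : ∀ (i : Fin n1) (j : Fin n2), (i, j) ∈ Ω → Y i j = M i j)
    (hYbarf : ∀ (i : Fin n1) (j : Fin n2), (i, j) ∈ Ω → Ybar i j = M i j) :
    Y = Ybar := by
  ext k l
  by_cases hkl : (k, l) ∈ Ω
  · rw [hYf k l hkl, hYbarf k l hkl]
  obtain ⟨e1, e2, -, -, -, -, h12, hk2, h1l, hdet⟩ := hassump k l hkl
  have hA : Y.submatrix e1 e2 = M.submatrix e1 e2 := by
    ext a b
    exact hYf _ _ (h12 a b)
  have hB : Ybar.submatrix e1 e2 = M.submatrix e1 e2 := by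
    ext a b
    exact hYbarf _ _ (h12 a b)
  obtain ⟨c, hc⟩ := exists_row_eq_vecMul Y hY e1 e2 (by rwa [hA]) k
  obtain ⟨d, hd⟩ := exists_row_eq_vecMul Ybar hYbar e1 e2 (by rwa [hB]) k
  have hcd : c = d := by
    apply Matrix.vecMul_injective_of_isUnit
      ((Matrix.isUnit_iff_isUnit_det _).2 (isUnit_iff_ne_zero.2 hdet))
    ext b
    have h1 := hc (e2 b)
    have h2 := hd (e2 b)
    rw [hYf _ _ (hk2 b)] at h1
    rw [hYbarf _ _ (hk2 b)] at h2
    simp only [hYf _ _ (h12 _ b)] at h1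
    simp only [hYbarf _ _ (h12 _ b)] at h2
    exact h1.symm.trans h2
  rw [hc l, hd l, hcd]
  refine Finset.sum_congr rfl fun a _ => ?_
  rw [hYf _ _ (h1l a), hYbarf _ _ (h1l a)]
end

section
/- Suppose the index set Ω is reducible and M ∈ V_Ω is nonzero. Let Ȳ be a minimum rank solution, i.e., P_Ω(Ȳ) = M and rank(Ȳ) is minimal among all matrices Y with P_Ω(Y) = M (so rank(Ȳ) ≥ 1). Then Ȳ is not locally unique: for every ε > 0 there exists Y ≠ Ȳ with ‖Y − Ȳ‖ < ε, P_Ω(Y) = M, and rank(Y) = rank(Ȳ). -/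
/-!
Say that an entry `(i, j)` is off-diagonal if its row and its column belong to different blocks of
the reducible pattern; all such entries lie outside `Ω`, so they may be changed freely.

If some off-diagonal entry of `Ȳ` is nonzero, rescale the rows of the first block by `exp s` and
the columns of the first block by `exp (-s)`: the diagonal blocks, hence the entries in `Ω`, are
unchanged, the rank is unchanged, and the off-diagonal blocks are multiplied by `exp s` and
`exp (-s)`. If `Ȳ` is block diagonal, it has a nonzero row `p` because `M ≠ 0`; add `s` times
row `p` to a row `q` of the other block, a transvection that changes only off-diagonal entries.
Both families are continuous in `s` and give `Ȳ` at `s = 0`.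
-/

attribute [local instance] Matrix.normedAddCommGroup

/-- The index set `Ω` is reducible: after permutations of rows and columns it splits into two
disjoint nonempty blocks `Ω' ⊆ {1..k}×{1..l}` and `Ω'' ⊆ {k+1..n1}×{l+1..n2}`
(in 0-based indexing: values `< k`, `< l`, resp. `≥ k`, `≥ l`). -/
def Reducible (n1 n2 : ℕ) (Ω : Finset (Fin n1 × Fin n2)) : Prop :=
  ∃ (σ : Equiv.Perm (Fin n1)) (τ : Equiv.Perm (Fin n2)) (k l : ℕ),
    1 ≤ k ∧ k < n1 ∧ 1 ≤ l ∧ l < n2 ∧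
    ∃ Ω' Ω'' : Finset (Fin n1 × Fin n2),
      Ω'.Nonempty ∧ Ω''.Nonempty ∧ Disjoint Ω' Ω'' ∧ Ω = Ω' ∪ Ω'' ∧
      (∀ p ∈ Ω', ((σ p.1 : ℕ) < k ∧ (τ p.2 : ℕ) < l)) ∧
      (∀ p ∈ Ω'', (k ≤ (σ p.1 : ℕ) ∧ l ≤ (τ p.2 : ℕ)))

/-- The form of the perturbation argument common to both cases: a continuous family through `Y₀`
that differs from `Y₀` at positive parameters comes arbitrarily close to `Y₀` at one of them. -/
lemma exists_close_of_continuous {n1 n2 : ℕ} {Y₀ : Matrix (Fin n1) (Fin n2) ℝ}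
    {f : ℝ → Matrix (Fin n1) (Fin n2) ℝ} (hf : Continuous f) (h0 : f 0 = Y₀)
    (P : Matrix (Fin n1) (Fin n2) ℝ → Prop) (hne : ∀ s > 0, f s ≠ Y₀) (hP : ∀ s > 0, P (f s))
    {ε : ℝ} (hε : 0 < ε) : ∃ Y, Y ≠ Y₀ ∧ ‖Y - Y₀‖ < ε ∧ P Y := by
  obtain ⟨δ, hδ, h⟩ := Metric.continuous_iff.1 hf 0 ε hε
  refine ⟨f (δ / 2), hne _ (half_pos hδ), ?_, hP _ (half_pos hδ)⟩
  have := h (δ / 2) (by rw [Real.dist_eq, sub_zero, abs_of_pos (half_pos hδ)]; linarith)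
  rwa [h0, dist_eq_norm] at this

/-- The perturbation statement for any nonzero matrix. The first block consists of the rows in `R`
and the columns in `C`, the second of the other rows and columns; `hR` says that both blocks
contain a row. -/
lemma exists_close_completion {n1 n2 : ℕ} (Ω : Finset (Fin n1 × Fin n2))
    (R : Fin n1 → Prop) (C : Fin n2 → Prop) (hΩ : ∀ i j, (i, j) ∈ Ω → (R i ↔ C j))
    (hR : ∀ p, ∃ q, ¬ (R p ↔ R q)) (Y₀ : Matrix (Fin n1) (Fin n2) ℝ) (hY₀ : Y₀ ≠ 0)
    {ε : ℝ} (hε : 0 < ε) :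
    ∃ Y, Y ≠ Y₀ ∧ ‖Y - Y₀‖ < ε ∧ ((∀ i j, (i, j) ∈ Ω → Y i j = Y₀ i j) ∧ Y.rank = Y₀.rank) := by
  classical
  by_cases hoff : ∃ i j, ¬ (R i ↔ C j) ∧ Y₀ i j ≠ 0
  · obtain ⟨a, b, hab, hYab⟩ := hoff
    let d : ℝ → Fin n1 → ℝ := fun s i => if R i then Real.exp s else 1
    let e : ℝ → Fin n2 → ℝ := fun s j => if C j then Real.exp (-s) else 1
    have hd : ∀ s, IsUnit (Matrix.diagonal (d s)).det := fun s => by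
      rw [Matrix.det_diagonal, isUnit_iff_ne_zero, Finset.prod_ne_zero_iff]
      intro i _
      simp only [d]
      split_ifs <;> simp [Real.exp_ne_zero]
    have he : ∀ s, IsUnit (Matrix.diagonal (e s)).det := fun s => by
      rw [Matrix.det_diagonal, isUnit_iff_ne_zero, Finset.prod_ne_zero_iff]
      intro i _
      simp only [e]
      split_ifs <;> simp [Real.exp_ne_zero]
    have hentry : ∀ s i j, (Matrix.diagonal (d s) * Y₀ * Matrix.diagonal (e s)) i j
        = d s i * Y₀ i j * e s j := fun s i j => by
      rw [Matrix.mul_diagonal, Matrix.diagonal_mul]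
    refine exists_close_of_continuous
      (f := fun s => Matrix.diagonal (d s) * Y₀ * Matrix.diagonal (e s)) ?_ ?_ _ ?_ ?_ hε
    · refine continuous_pi fun i => continuous_pi fun j => ?_
      simp only [hentry, d, e]
      split_ifs <;> fun_prop
    · ext i j
      simp [d, e]
    · intro s hs h
      have h1 := congrFun (congrFun h a) b
      have hpos : Real.exp s ≠ 1 := by simpa using hs.ne'
      have hneg : Real.exp (-s) ≠ 1 := by simpa using hs.ne'
      simp only [hentry, d, e] at h1
      by_cases ha : R a <;> by_cases hb : C b <;> simp_all
    · intro s hs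
      refine ⟨fun i j hij => ?_, ?_⟩
      · have h1 := hΩ i j hij
        rw [hentry]
        by_cases hb : C j
        · simp only [d, e, h1.2 hb, hb, if_true]
          rw [mul_right_comm, ← Real.exp_add]
          simp
        · simp [d, e, h1, hb]
      · rw [Matrix.rank_mul_eq_left_of_isUnit_det _ _ (he s),
          Matrix.rank_mul_eq_right_of_isUnit_det _ _ (hd s)]
  · have hzero : ∀ i j, ¬ (R i ↔ C j) → Y₀ i j = 0 := fun i j h => by
      by_contra h0
      exact hoff ⟨i, j, h, h0⟩
    obtain ⟨p, b, hpb⟩ : ∃ p b, Y₀ p b ≠ 0 := by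
      by_contra! h
      exact hY₀ (Matrix.ext h)
    obtain ⟨q, hq⟩ := hR p
    have hqp : q ≠ p := by
      rintro rfl
      exact hq Iff.rfl
    have hrow : ∀ s j, (Matrix.transvection q p s * Y₀) q j = Y₀ q j + s * Y₀ p j := fun s j =>
      Matrix.transvection_mul_apply_same q p j s Y₀
    refine exists_close_of_continuous
      (f := fun s => Matrix.transvection q p s * Y₀) ?_ ?_ _ ?_ ?_ hε
    · refine continuous_pi fun i => continuous_pi fun j => ?_
      by_cases hi : i = q
      · subst hi
        simp only [hrow]
        fun_prop
      · simp only [Matrix.transvection_mul_apply_of_ne q p i j hi]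
        fun_prop
    · simp
    · intro s hs h
      have h1 := congrFun (congrFun h q) b
      rw [hrow] at h1
      simp [hs.ne', hpb] at h1
    · intro s hs
      refine ⟨fun i j hij => ?_, ?_⟩
      · by_cases hi : i = q
        · subst hi
          -- Column `j` is in the block of row `q`, hence not in that of row `p`.
          have h1 : Y₀ p j = 0 := hzero p j fun h => hq (h.trans (hΩ _ _ hij).symm)
          rw [hrow, h1, mul_zero, add_zero]
        · exact Matrix.transvection_mul_apply_of_ne q p i j hi s Y₀
      · refine Matrix.rank_mul_eq_right_of_isUnit_det _ _ ?_
        rw [Matrix.det_transvection_of_ne q p hqp]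
        exact isUnit_one

/-- If `Ω` is reducible and `M ∈ V_Ω` is nonzero, then no minimum rank solution
`Ȳ` is locally unique: arbitrarily close to `Ȳ` there are other completions of the same
rank. -/
theorem stmt_12 (n1 n2 : ℕ) (hn1 : 2 ≤ n1) (hn2 : 2 ≤ n2)
    (Ω : Finset (Fin n1 × Fin n2)) (hred : Reducible n1 n2 Ω)
    (M : Matrix (Fin n1) (Fin n2) ℝ)
    (hMsupp : ∀ (i : Fin n1) (j : Fin n2), (i, j) ∉ Ω → M i j = 0) (hM0 : M ≠ 0)
    (Ybar : Matrix (Fin n1) (Fin n2) ℝ)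
    (hfeas : ∀ (i : Fin n1) (j : Fin n2), (i, j) ∈ Ω → Ybar i j = M i j)
    (hmin : ∀ Y : Matrix (Fin n1) (Fin n2) ℝ,
      (∀ (i : Fin n1) (j : Fin n2), (i, j) ∈ Ω → Y i j = M i j) → Ybar.rank ≤ Y.rank) :
    ∀ ε > (0 : ℝ), ∃ Y : Matrix (Fin n1) (Fin n2) ℝ, Y ≠ Ybar ∧ ‖Y - Ybar‖ < ε ∧
      (∀ (i : Fin n1) (j : Fin n2), (i, j) ∈ Ω → Y i j = M i j) ∧
      Y.rank = Ybar.rank := by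
  intro ε hε
  obtain ⟨σ, τ, k, l, hk, hkn, -, -, Ω', Ω'', -, -, -, rfl, h', h''⟩ := hred
  have hY : Ybar ≠ 0 := by
    rintro rfl
    refine hM0 (Matrix.ext fun i j => ?_)
    by_cases hij : (i, j) ∈ Ω' ∪ Ω''
    · exact (hfeas i j hij).symm
    · exact hMsupp i j hij
  obtain ⟨Y, hne, hnorm, hag, hrank⟩ := exists_close_completion (Ω' ∪ Ω'')
    (fun i => (σ i : ℕ) < k) (fun j => (τ j : ℕ) < l)
    (fun i j hij => by
      rcases Finset.mem_union.1 hij with h | h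
      · exact iff_of_true (h' _ h).1 (h' _ h).2
      · exact iff_of_false (h'' _ h).1.not_gt (h'' _ h).2.not_gt)
    (fun p => by
      by_cases hp : (σ p : ℕ) < k
      · exact ⟨σ.symm ⟨k, hkn⟩, by simp [hp]⟩
      · exact ⟨σ.symm ⟨0, by omega⟩, by rw [Equiv.apply_symm_apply]; exact fun h => hp (h.2 hk)⟩)
    Ybar hY hε
  exact ⟨Y, hne, hnorm, fun i j hij => (hag i j hij).trans (hfeas i j hij), hrank⟩
end

section
/- Suppose the index set Ω is irreducible, M_{ij} ≠ 0 for all (i,j) ∈ Ω, and every row and every column contains at least one observed index (for every i there is j with (i,j) ∈ Ω, and for every j there is i with (i,j) ∈ Ω). Then any rank one solution of the matrix completion problem is globally unique: if Y and Y' are matrices of rank one with P_Ω(Y) = M and P_Ω(Y') = M, then Y = Y'. -/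
/-- A rank one matrix is an outer product. -/
theorem exists_factor_of_rank_eq_one {n1 n2 : ℕ} (Y : Matrix (Fin n1) (Fin n2) ℝ)
    (hY : Y.rank = 1) : ∃ (u : Fin n1 → ℝ) (v : Fin n2 → ℝ), ∀ i j, Y i j = u i * v j := by
  rw [Matrix.rank_eq_finrank_span_cols] at hY
  obtain ⟨⟨u, _⟩, h⟩ := finrank_le_one_iff.mp hY.le
  have hcol : ∀ j, ∃ c : ℝ, c • u = Y.col j := fun j => by
    obtain ⟨c, hc⟩ := h ⟨Y.col j, Submodule.subset_span ⟨j, rfl⟩⟩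
    exact ⟨c, congrArg Subtype.val hc⟩
  choose v hv using hcol
  refine ⟨u, v, fun i j => ?_⟩
  have := congrFun (hv j) i
  simp only [Pi.smul_apply, smul_eq_mul, Matrix.col_apply] at this
  rw [← this, mul_comm]

/-- Any predicate on `Fin n` that is neither always nor never satisfied becomes an initial segment
after a permutation. -/
theorem exists_perm_initial_segment {n : ℕ} (P : Fin n → Prop) (hP : ∃ i, P i)
    (hP' : ∃ i, ¬ P i) :
    ∃ (σ : Equiv.Perm (Fin n)) (k : ℕ), 1 ≤ k ∧ k < n ∧ ∀ i, P i ↔ (σ i : ℕ) < k := by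
  classical
  have hlt : Fintype.card {i // P i} < n := by
    obtain ⟨i, hi⟩ := hP'
    simpa using Fintype.card_subtype_lt hi
  have hcard : Fintype.card {i // P i} =
      Fintype.card {i : Fin n // (i : ℕ) < Fintype.card {i // P i}} := by
    rw [Fintype.card_subtype (fun i : Fin n => (i : ℕ) < Fintype.card {i // P i}),
      Fin.card_filter_val_lt, min_eq_right hlt.le]
  let e := Fintype.equivOfCardEq hcard
  refine ⟨e.extendSubtype, Fintype.card {i // P i}, ?_, hlt, fun i => ⟨fun hi => ?_, fun hi => ?_⟩⟩
  · obtain ⟨i, hi⟩ := hP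
    exact Fintype.card_pos_iff.mpr ⟨⟨i, hi⟩⟩
  · exact e.extendSubtype_mem i hi
  · by_contra hn
    exact e.extendSubtype_not_mem i hn hi

/-- If rows and columns are two-coloured so that the ends of every edge of `Ω` have the same colour
and both colours occur among the rows, then `Ω` is reducible. -/
theorem reducible_of_separated {n1 n2 : ℕ} (Ω : Finset (Fin n1 × Fin n2))
    (hrows : ∀ i : Fin n1, ∃ j : Fin n2, (i, j) ∈ Ω)
    (P : Fin n1 → Prop) (Q : Fin n2 → Prop) (hPQ : ∀ i j, (i, j) ∈ Ω → (P i ↔ Q j))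
    (hP : ∃ i, P i) (hP' : ∃ i, ¬ P i) : Reducible n1 n2 Ω := by
  classical
  obtain ⟨σ, k, hk1, hk, hσ⟩ := exists_perm_initial_segment P hP hP'
  obtain ⟨i, hi⟩ := hP
  obtain ⟨i', hi'⟩ := hP'
  obtain ⟨j, hj⟩ := hrows i
  obtain ⟨j', hj'⟩ := hrows i'
  obtain ⟨τ, l, hl1, hl, hτ⟩ := exists_perm_initial_segment Q ⟨j, (hPQ i j hj).mp hi⟩
    ⟨j', fun h => hi' ((hPQ i' j' hj').mpr h)⟩
  refine ⟨σ, τ, k, l, hk1, hk, hl1, hl, Ω.filter (fun p => P p.1), Ω.filter (fun p => ¬ P p.1),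
    ⟨(i, j), by simp [hi, hj]⟩, ⟨(i', j'), by simp [hi', hj']⟩,
    Finset.disjoint_filter_filter_not _ _ _, (Finset.filter_union_filter_not_eq _ _).symm, ?_, ?_⟩
  · rintro ⟨a, b⟩ hp
    obtain ⟨hab, ha⟩ := Finset.mem_filter.mp hp
    exact ⟨(hσ a).mp ha, (hτ b).mp ((hPQ a b hab).mp ha)⟩
  · rintro ⟨a, b⟩ hp
    obtain ⟨hab, ha⟩ := Finset.mem_filter.mp hp
    exact ⟨not_lt.mp fun h => ha ((hσ a).mpr h),
      not_lt.mp fun h => ha ((hPQ a b hab).mpr ((hτ b).mpr h))⟩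

/-- If `Ω` is irreducible, all observed entries are nonzero, and every row and
column contains an observed index, then the rank one completion is globally unique. -/
theorem stmt_13 (n1 n2 : ℕ) (hn1 : 2 ≤ n1) (hn2 : 2 ≤ n2)
    (Ω : Finset (Fin n1 × Fin n2)) (hirr : ¬ Reducible n1 n2 Ω)
    (M : Matrix (Fin n1) (Fin n2) ℝ)
    (hMsupp : ∀ (i : Fin n1) (j : Fin n2), (i, j) ∉ Ω → M i j = 0)
    (hMne : ∀ (i : Fin n1) (j : Fin n2), (i, j) ∈ Ω → M i j ≠ 0)
    (hrows : ∀ i : Fin n1, ∃ j : Fin n2, (i, j) ∈ Ω)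
    (hcols : ∀ j : Fin n2, ∃ i : Fin n1, (i, j) ∈ Ω)
    (Y Y' : Matrix (Fin n1) (Fin n2) ℝ)
    (hY : Y.rank = 1) (hY' : Y'.rank = 1)
    (hYf : ∀ (i : Fin n1) (j : Fin n2), (i, j) ∈ Ω → Y i j = M i j)
    (hY'f : ∀ (i : Fin n1) (j : Fin n2), (i, j) ∈ Ω → Y' i j = M i j) :
    Y = Y' := by
  obtain ⟨u, v, huv⟩ := exists_factor_of_rank_eq_one Y hY
  obtain ⟨u', v', huv'⟩ := exists_factor_of_rank_eq_one Y' hY'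
  have hne : ∀ i j, (i, j) ∈ Ω → u i * v j ≠ 0 := fun i j h => by
    rw [← huv, hYf i j h]; exact hMne i j h
  have heq : ∀ i j, (i, j) ∈ Ω → u i * v j = u' i * v' j := fun i j h => by
    rw [← huv, ← huv', hYf i j h, hY'f i j h]
  have hu : ∀ i, u i ≠ 0 := fun i => by
    obtain ⟨j, hj⟩ := hrows i
    exact left_ne_zero_of_mul (hne i j hj)
  have hv' : ∀ j, v' j ≠ 0 := fun j => by
    obtain ⟨i, hi⟩ := hcols j
    exact right_ne_zero_of_mul (heq i j hi ▸ hne i j hi)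
  have hratio : ∀ i j, (i, j) ∈ Ω → u' i / u i = v j / v' j := fun i j h => by
    rw [div_eq_div_iff (hu i) (hv' j), ← heq i j h, mul_comm]
  -- the common ratio, read off from the first row
  obtain ⟨c, hc⟩ : ∃ c, c = u' ⟨0, by omega⟩ / u ⟨0, by omega⟩ := ⟨_, rfl⟩
  have hrow : ∀ i, u' i / u i = c := by
    by_contra hcon
    exact hirr (reducible_of_separated Ω hrows (fun i => u' i / u i = c) (fun j => v j / v' j = c)
      (fun i j h => by rw [hratio i j h]) ⟨_, hc.symm⟩ (not_forall.mp hcon))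
  have hcol : ∀ j, v j / v' j = c := fun j => by
    obtain ⟨i, hi⟩ := hcols j
    rw [← hratio i j hi, hrow i]
  ext i j
  rw [huv, huv', (div_eq_iff (hv' j)).mp (hcol j), (div_eq_iff (hu i)).mp (hrow i)]
  ring
end

section
/- Let Y ∈ ℝ^{n1×n2} have rank r and suppose Y minimizes the function Y' ↦ Σ_{(i,j)∈Ω}(M_{ij} − Y'_{ij})² over the set of all n1×n2 matrices of rank r. Then (P_Ω(Y) − M)ᵀ Y = 0 and Y (P_Ω(Y) − M)ᵀ = 0. -/
/-!
Write `E = P_Ω(Y) - M`. Along a line `Y + t D` the objective is a quadratic polynomial in `t` with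
linear coefficient `2 ⟨E, D⟩`, because `E` vanishes off `Ω` and equals `Y - M` on `Ω`. So if
`Y + t D` keeps rank `r` for all small `t`, minimality forces `⟨E, D⟩ = 0`
(`trace_mul_transpose_eq_zero_of_min`).

Such directions are `D = A Y` and `D = Y B`, since `1 + t A` and `1 + t B` are invertible for
small `t` and multiplication by an invertible matrix preserves rank. Taking `A = E Yᵀ` gives
`⟨E, A Y⟩ = ‖E Yᵀ‖²`, and taking `B = Yᵀ E` gives `⟨E, Y B⟩ = ‖Yᵀ E‖²`; both norms
therefore vanish.
-/

open scoped Matrix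

/-- The projection `P_Ω` onto the matrices supported on the observed pattern `Ω`. -/
def projP {n1 n2 : ℕ} (Ω : Finset (Fin n1 × Fin n2)) (Y : Matrix (Fin n1) (Fin n2) ℝ) :
    Matrix (Fin n1) (Fin n2) ℝ :=
  Matrix.of fun i j => if (i, j) ∈ Ω then Y i j else 0

open Filter Topology

lemma eventually_isUnit_det_one_add_smul {n : ℕ} (A : Matrix (Fin n) (Fin n) ℝ) :
    ∀ᶠ t : ℝ in 𝓝 0, IsUnit (1 + t • A).det := by
  have hc : Continuous fun t : ℝ => (1 + t • A).det := by fun_prop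
  have h0 : (1 + (0 : ℝ) • A).det ≠ 0 := by simp
  filter_upwards [hc.continuousAt.eventually_ne h0] with t ht
  exact isUnit_iff_ne_zero.mpr ht

/-- The real Frobenius norm is definite. -/
lemma eq_zero_of_trace_mul_transpose {m n : ℕ} (A : Matrix (Fin m) (Fin n) ℝ)
    (h : (A * Aᵀ).trace = 0) : A = 0 := by
  rw [← Matrix.conjTranspose_eq_transpose_of_trivial] at h
  exact Matrix.trace_mul_conjTranspose_self_eq_zero_iff.mp h

/-- First-order optimality: the residual is Frobenius-orthogonal to every direction along which
the rank is locally constant at `Y`. -/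
lemma trace_mul_transpose_eq_zero_of_min {n1 n2 r : ℕ}
    (Ω : Finset (Fin n1 × Fin n2)) (M : Matrix (Fin n1) (Fin n2) ℝ)
    (hMsupp : ∀ (i : Fin n1) (j : Fin n2), (i, j) ∉ Ω → M i j = 0)
    (Y : Matrix (Fin n1) (Fin n2) ℝ)
    (hmin : ∀ Y' : Matrix (Fin n1) (Fin n2) ℝ, Y'.rank = r →
      ∑ p ∈ Ω, (M p.1 p.2 - Y p.1 p.2) ^ 2 ≤ ∑ p ∈ Ω, (M p.1 p.2 - Y' p.1 p.2) ^ 2)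
    (D : Matrix (Fin n1) (Fin n2) ℝ) (hD : ∀ᶠ t : ℝ in 𝓝 0, (Y + t • D).rank = r) :
    (D * (projP Ω Y - M)ᵀ).trace = 0 := by
  have htr : (D * (projP Ω Y - M)ᵀ).trace
      = ∑ p ∈ Ω, D p.1 p.2 * (Y p.1 p.2 - M p.1 p.2) := by
    simp only [Matrix.trace, Matrix.diag, Matrix.mul_apply, Matrix.transpose_apply]
    rw [← Fintype.sum_prod_type' (f := fun i j => D i j * (projP Ω Y - M) i j)]
    symm
    refine Finset.sum_subset_zero_on_sdiff (Finset.subset_univ _) ?_ ?_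
    · rintro ⟨i, j⟩ hp
      have hp' : (i, j) ∉ Ω := by simpa using hp
      simp [projP, hp', hMsupp i j hp']
    · rintro ⟨i, j⟩ hp
      simp [projP, hp]
  have hloc : IsLocalMin
      (fun t : ℝ => ∑ p ∈ Ω, (M p.1 p.2 - (Y p.1 p.2 + t * D p.1 p.2)) ^ 2) 0 := by
    filter_upwards [hD] with t ht
    simpa using hmin _ ht
  have hder : HasDerivAt
      (fun t : ℝ => ∑ p ∈ Ω, (M p.1 p.2 - (Y p.1 p.2 + t * D p.1 p.2)) ^ 2)
      (∑ p ∈ Ω, 2 * (D p.1 p.2 * (Y p.1 p.2 - M p.1 p.2))) 0 := by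
    refine HasDerivAt.fun_sum fun p _ => ?_
    have h := ((((hasDerivAt_id (0 : ℝ)).mul_const (D p.1 p.2)).const_add
      (Y p.1 p.2)).const_sub (M p.1 p.2)).pow 2
    refine h.congr_deriv ?_
    simp
    ring
  have h0 := hloc.hasDerivAt_eq_zero hder
  rw [← Finset.mul_sum] at h0
  rw [htr]
  linarith

/-- If `Y` of rank `r` minimizes `Σ_{(i,j)∈Ω}(M_{ij} − Y'_{ij})²` over all
rank-`r` matrices, then `(P_Ω(Y) − M)ᵀ Y = 0` and `Y (P_Ω(Y) − M)ᵀ = 0`. -/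
theorem stmt_15 (n1 n2 r : ℕ) (hn1 : 2 ≤ n1) (hn2 : 2 ≤ n2)
    (Ω : Finset (Fin n1 × Fin n2)) (M : Matrix (Fin n1) (Fin n2) ℝ)
    (hMsupp : ∀ (i : Fin n1) (j : Fin n2), (i, j) ∉ Ω → M i j = 0)
    (Y : Matrix (Fin n1) (Fin n2) ℝ) (hrank : Y.rank = r)
    (hmin : ∀ Y' : Matrix (Fin n1) (Fin n2) ℝ, Y'.rank = r →
      ∑ p ∈ Ω, (M p.1 p.2 - Y p.1 p.2) ^ 2 ≤ ∑ p ∈ Ω, (M p.1 p.2 - Y' p.1 p.2) ^ 2) :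
    (projP Ω Y - M)ᵀ * Y = 0 ∧ Y * (projP Ω Y - M)ᵀ = 0 := by
  have key := trace_mul_transpose_eq_zero_of_min Ω M hMsupp Y hmin
  set E := projP Ω Y - M
  constructor
  · have hB : Yᵀ * E = 0 := by
      apply eq_zero_of_trace_mul_transpose
      have h := key (Y * (Yᵀ * E)) (by
        filter_upwards [eventually_isUnit_det_one_add_smul (Yᵀ * E)] with t ht
        rw [← hrank, ← Matrix.rank_mul_eq_left_of_isUnit_det _ Y ht, Matrix.mul_add,
          Matrix.mul_one, Matrix.mul_smul])
      rw [Matrix.mul_assoc, Matrix.trace_mul_comm] at h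
      simpa [Matrix.transpose_mul, Matrix.mul_assoc] using h
    simpa [Matrix.transpose_mul] using congrArg Matrix.transpose hB
  · have hA : E * Yᵀ = 0 := by
      apply eq_zero_of_trace_mul_transpose
      have h := key (E * Yᵀ * Y) (by
        filter_upwards [eventually_isUnit_det_one_add_smul (E * Yᵀ)] with t ht
        rw [← hrank, ← Matrix.rank_mul_eq_right_of_isUnit_det _ Y ht, Matrix.add_mul,
          Matrix.one_mul, Matrix.smul_mul])
      simpa [Matrix.transpose_mul, Matrix.mul_assoc] using h
    simpa [Matrix.transpose_mul] using congrArg Matrix.transpose hA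
end

section
/- Let 1 ≤ r ≤ min(n1,n2), let 𝔉(V,W,X) := V Wᵀ + X on Θ = F_r × G_r × V_{Ω^c}, and let ϱ := sup_{θ∈Θ} rank(D𝔉(θ)) be its characteristic rank. If θ = (V,W,X) ∈ Θ is a regular point (rank(D𝔉(θ)) = ϱ), then the matrix Y = V Wᵀ (which has rank r) satisfies the well-posedness condition V_{Ω^c} ∩ T(Y) = {0} if and only if ϱ = r(n1+n2−r) + n1 n2 − m. -/
/-! The derivative of `𝔉` at `θ = (V, W, X)` sends `(A, B, Z)` to `A Wᵀ + V Bᵀ + Z`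
(`fderiv_Fmap_apply`), so its range is `T + S`, where `T` is the range of
`(A, B) ↦ A Wᵀ + V Bᵀ` (`factorTangent`) and `S` is the space of matrices vanishing on `Ω`.

Since `V` and `W` have full column rank they have left inverses. Hence `T = T(V Wᵀ)`
(`mem_range_factorTangent_iff`), and the kernel of `(A, B) ↦ A Wᵀ + V Bᵀ` consists of the pairs
`(V C, -W Cᵀ)` with `C` an arbitrary `r × r` matrix (`ker_factorTangent`), so that
`dim T = r (n1 + n2) - r²` (`finrank_range_factorTangent`). As `dim S = n1 n2 - m`, Grassmann's
formula `dim (T + S) + dim (T ∩ S) = dim T + dim S` shows that `T ∩ S = 0` exactly when the rank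
of the derivative, which is `ϱ` at a regular point, equals `r (n1 + n2 - r) + n1 n2 - m`. -/

open scoped Matrix

/-- The mapping `𝔉(V,W,X) = V Wᵀ + X`, with `X ∈ V_{Ω^c}` parametrized by its entries on
`Ω^c`, defined on the ambient space `ℝ^{n1×r} × ℝ^{n2×r} × ℝ^{Ω^c}`. -/
noncomputable def Fmap (n1 n2 r : ℕ) (Ω : Finset (Fin n1 × Fin n2))
    (θ : (Fin n1 → Fin r → ℝ) × (Fin n2 → Fin r → ℝ) ×
      ({p : Fin n1 × Fin n2 // p ∉ Ω} → ℝ)) : Fin n1 → Fin n2 → ℝ :=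
  fun i j => (Matrix.of θ.1 * (Matrix.of θ.2.1)ᵀ) i j +
    if h : (i, j) ∉ Ω then θ.2.2 ⟨(i, j), h⟩ else 0

/-- The rank of the Fréchet derivative `D𝔉(θ)`. -/
noncomputable def derivRank (n1 n2 r : ℕ) (Ω : Finset (Fin n1 × Fin n2))
    (θ : (Fin n1 → Fin r → ℝ) × (Fin n2 → Fin r → ℝ) ×
      ({p : Fin n1 × Fin n2 // p ∉ Ω} → ℝ)) : ℕ :=
  Module.finrank ℝ (LinearMap.range (fderiv ℝ (Fmap n1 n2 r Ω) θ).toLinearMap)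

/-- `Θ = F_r × G_r × V_{Ω^c}`: the first two components have full column rank `r`. -/
def ThetaSet (n1 n2 r : ℕ) (Ω : Finset (Fin n1 × Fin n2)) :
    Set ((Fin n1 → Fin r → ℝ) × (Fin n2 → Fin r → ℝ) ×
      ({p : Fin n1 × Fin n2 // p ∉ Ω} → ℝ)) :=
  {θ | (Matrix.of θ.1).rank = r ∧ (Matrix.of θ.2.1).rank = r}

/-- The characteristic rank `ϱ = sup_{θ ∈ Θ} rank(D𝔉(θ))`. -/
noncomputable def charRank (n1 n2 r : ℕ) (Ω : Finset (Fin n1 × Fin n2)) : ℕ :=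
  sSup {k : ℕ | ∃ θ ∈ ThetaSet n1 n2 r Ω, derivRank n1 n2 r Ω θ = k}

/-- The part `(A, B) ↦ A Wᵀ + V Bᵀ` of the derivative of `𝔉` that comes from the factors; its
range is the tangent space to the rank-`r` matrices at `V Wᵀ`. -/
noncomputable def factorTangent {n1 n2 r : ℕ} (V : Matrix (Fin n1) (Fin r) ℝ)
    (W : Matrix (Fin n2) (Fin r) ℝ) :
    (Matrix (Fin n1) (Fin r) ℝ × Matrix (Fin n2) (Fin r) ℝ) →ₗ[ℝ] Matrix (Fin n1) (Fin n2) ℝ where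
  toFun p := p.1 * Wᵀ + V * p.2ᵀ
  map_add' p q := by
    simp only [Prod.fst_add, Prod.snd_add, Matrix.transpose_add, Matrix.add_mul, Matrix.mul_add]
    abel
  map_smul' c p := by simp

/-- Extension by zero of a family indexed by `Ω^c` to a matrix; its range is `V_{Ω^c}`. -/
noncomputable def extendZero {n1 n2 : ℕ} (Ω : Finset (Fin n1 × Fin n2)) :
    ({p : Fin n1 × Fin n2 // p ∉ Ω} → ℝ) →ₗ[ℝ] Matrix (Fin n1) (Fin n2) ℝ where
  toFun Z := Matrix.of fun i j => if h : (i, j) ∉ Ω then Z ⟨(i, j), h⟩ else 0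
  map_add' Z Z' := by
    ext i j
    by_cases h : (i, j) ∈ Ω <;> simp [h]
  map_smul' c Z := by
    ext i j
    by_cases h : (i, j) ∈ Ω <;> simp [h]

lemma exists_left_inverse_of_rank {n r : ℕ} {V : Matrix (Fin n) (Fin r) ℝ} (hV : V.rank = r) :
    ∃ P : Matrix (Fin r) (Fin n) ℝ, P * V = 1 := by
  have hinj : Function.Injective V.mulVecLin := by
    rw [← LinearMap.ker_eq_bot, ← Submodule.finrank_eq_zero (R := ℝ)]
    have h := V.mulVecLin.finrank_range_add_finrank_ker
    rw [← Matrix.rank, hV] at h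
    simpa using h
  obtain ⟨g, hg⟩ := V.mulVecLin.exists_leftInverse_of_injective (LinearMap.ker_eq_bot.2 hinj)
  refine ⟨LinearMap.toMatrix' g, ?_⟩
  have h := congrArg LinearMap.toMatrix' hg
  rw [LinearMap.toMatrix'_comp, ← Matrix.toLin'_apply', LinearMap.toMatrix'_toLin'] at h
  simpa using h

lemma mem_range_factorTangent_iff {n1 n2 r : ℕ} {V : Matrix (Fin n1) (Fin r) ℝ}
    {W : Matrix (Fin n2) (Fin r) ℝ} (hV : V.rank = r) (hW : W.rank = r)
    (H : Matrix (Fin n1) (Fin n2) ℝ) :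
    H ∈ LinearMap.range (factorTangent V W) ↔
      ∃ (Q1 : Matrix (Fin n1) (Fin n1) ℝ) (Q2 : Matrix (Fin n2) (Fin n2) ℝ),
        H = Q1 * (V * Wᵀ) + (V * Wᵀ) * Q2 := by
  constructor
  · rintro ⟨⟨A, B⟩, rfl⟩
    obtain ⟨P, hP⟩ := exists_left_inverse_of_rank hV
    obtain ⟨R, hR⟩ := exists_left_inverse_of_rank hW
    have hR' : Wᵀ * Rᵀ = 1 := by rw [← Matrix.transpose_mul, hR, Matrix.transpose_one]
    refine ⟨A * P, Rᵀ * Bᵀ, ?_⟩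
    have h1 : A * P * (V * Wᵀ) = A * (P * V) * Wᵀ := by simp only [Matrix.mul_assoc]
    have h2 : V * Wᵀ * (Rᵀ * Bᵀ) = V * (Wᵀ * Rᵀ) * Bᵀ := by simp only [Matrix.mul_assoc]
    rw [h1, h2, hP, hR', Matrix.mul_one, Matrix.mul_one]
    rfl
  · rintro ⟨Q1, Q2, rfl⟩
    refine ⟨(Q1 * V, (Wᵀ * Q2)ᵀ), ?_⟩
    simp [factorTangent, Matrix.mul_assoc]

/-- The map `C ↦ (V C, -W Cᵀ)`, the infinitesimal action of `GL_r` on factorizations `V Wᵀ`. -/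
noncomputable def gaugeMap {n1 n2 r : ℕ} (V : Matrix (Fin n1) (Fin r) ℝ)
    (W : Matrix (Fin n2) (Fin r) ℝ) :
    Matrix (Fin r) (Fin r) ℝ →ₗ[ℝ]
      (Matrix (Fin n1) (Fin r) ℝ × Matrix (Fin n2) (Fin r) ℝ) where
  toFun C := (V * C, -(W * Cᵀ))
  map_add' C D := by
    ext1
    · simp [Matrix.mul_add]
    · simp [Matrix.mul_add, add_comm]
  map_smul' c C := by simp

/-- The factors are determined to first order by the product up to the action of `GL_r`. -/
lemma ker_factorTangent {n1 n2 r : ℕ} {V : Matrix (Fin n1) (Fin r) ℝ}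
    {W : Matrix (Fin n2) (Fin r) ℝ} (hV : V.rank = r) (hW : W.rank = r) :
    LinearMap.ker (factorTangent V W) = LinearMap.range (gaugeMap V W) := by
  obtain ⟨P, hP⟩ := exists_left_inverse_of_rank hV
  obtain ⟨R, hR⟩ := exists_left_inverse_of_rank hW
  have hR' : Wᵀ * Rᵀ = 1 := by rw [← Matrix.transpose_mul, hR, Matrix.transpose_one]
  ext ⟨A, B⟩
  constructor
  · intro h
    have h0 : A * Wᵀ + V * Bᵀ = 0 := h
    -- Multiply on the left by `P` for `Bᵀ = -(P A) Wᵀ`, and on the right by `Rᵀ` for `A`.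
    have hB : Bᵀ = -(P * A * Wᵀ) := by
      have := congrArg (P * ·) h0
      simp only [Matrix.mul_add, ← Matrix.mul_assoc, hP, Matrix.one_mul, Matrix.mul_zero] at this
      exact (neg_eq_of_add_eq_zero_right this).symm
    have hA : A = V * (P * A) := by
      have := congrArg (· * Rᵀ) h0
      simp only [hB, Matrix.add_mul, Matrix.mul_neg, Matrix.neg_mul, Matrix.mul_assoc, hR',
        Matrix.mul_one, Matrix.zero_mul] at this
      exact add_neg_eq_zero.1 this
    refine ⟨P * A, Prod.ext hA.symm ?_⟩
    have := congrArg Matrix.transpose hB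
    rw [Matrix.transpose_transpose, Matrix.transpose_neg, Matrix.transpose_mul,
      Matrix.transpose_transpose] at this
    exact this.symm
  · rintro ⟨C, hC⟩
    rw [← hC]
    simp [factorTangent, gaugeMap, Matrix.mul_assoc]

lemma finrank_range_factorTangent {n1 n2 r : ℕ} {V : Matrix (Fin n1) (Fin r) ℝ}
    {W : Matrix (Fin n2) (Fin r) ℝ} (hV : V.rank = r) (hW : W.rank = r) :
    Module.finrank ℝ (LinearMap.range (factorTangent V W)) + r * r = n1 * r + n2 * r := by
  obtain ⟨P, hP⟩ := exists_left_inverse_of_rank hV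
  have hinj : Function.Injective (gaugeMap V W) := by
    intro C D h
    have h1 : V * C = V * D := congrArg Prod.fst h
    have := congrArg (P * ·) h1
    simpa only [← Matrix.mul_assoc, hP, Matrix.one_mul] using this
  have h := (factorTangent V W).finrank_range_add_finrank_ker
  rw [ker_factorTangent hV hW, LinearMap.finrank_range_of_inj hinj] at h
  simpa [Module.finrank_matrix] using h

lemma mem_range_extendZero_iff {n1 n2 : ℕ} (Ω : Finset (Fin n1 × Fin n2))
    (H : Matrix (Fin n1) (Fin n2) ℝ) :
    H ∈ LinearMap.range (extendZero Ω) ↔ ∀ i j, (i, j) ∈ Ω → H i j = 0 := by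
  constructor
  · rintro ⟨Z, rfl⟩ i j h
    simp [extendZero, h]
  · intro h
    refine ⟨fun p => H p.1.1 p.1.2, ?_⟩
    ext i j
    by_cases hij : (i, j) ∈ Ω
    · simp [extendZero, hij, h i j hij]
    · simp [extendZero, hij]

lemma finrank_range_extendZero {n1 n2 : ℕ} (Ω : Finset (Fin n1 × Fin n2)) :
    Module.finrank ℝ (LinearMap.range (extendZero Ω)) = n1 * n2 - Ω.card := by
  have hinj : Function.Injective (extendZero Ω) := by
    intro Z Z' h
    funext ⟨⟨i, j⟩, hp⟩
    have := congrFun (congrFun h i) j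
    simpa [extendZero, hp] using this
  rw [LinearMap.finrank_range_of_inj hinj, Module.finrank_fintype_fun_eq_card,
    Fintype.card_subtype_compl]
  simp

lemma fderiv_Fmap_apply {n1 n2 r : ℕ} (Ω : Finset (Fin n1 × Fin n2))
    (θ h : (Fin n1 → Fin r → ℝ) × (Fin n2 → Fin r → ℝ) ×
      ({p : Fin n1 × Fin n2 // p ∉ Ω} → ℝ)) :
    Matrix.of (fderiv ℝ (Fmap n1 n2 r Ω) θ h) =
      factorTangent (Matrix.of θ.1) (Matrix.of θ.2.1) (Matrix.of h.1, Matrix.of h.2.1) +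
        extendZero Ω h.2.2 := by
  have hentry : ∀ i j, HasFDerivAt (fun η => Fmap n1 n2 r Ω η i j)
      ((ContinuousLinearMap.proj j).comp ((ContinuousLinearMap.proj i).comp
        (fderiv ℝ (Fmap n1 n2 r Ω) θ))) θ := by
    have hd : DifferentiableAt ℝ (Fmap n1 n2 r Ω) θ := by
      refine differentiableAt_pi.2 fun i => differentiableAt_pi.2 fun j => ?_
      by_cases hij : (i, j) ∈ Ω <;>
        simp only [Fmap, hij, Matrix.mul_apply, Matrix.of_apply, Matrix.transpose_apply,
          not_true_eq_false, not_false_eq_true, dite_true, dite_false] <;> fun_prop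
    intro i j
    exact hasFDerivAt_pi'.1 (hasFDerivAt_pi'.1 hd.hasFDerivAt i) j
  ext i j
  -- Compare the entry with the derivative of `t ↦ 𝔉(θ + t h)` at `t = 0`.
  have hline : HasDerivAt (fun t : ℝ => θ + t • h) h 0 := by
    simpa using ((hasDerivAt_id (0 : ℝ)).smul_const h).const_add θ
  have h1 := (hentry i j).comp_hasDerivAt_of_eq (0 : ℝ) hline (by simp)
  have hfac : ∀ a b c d : ℝ, HasDerivAt (fun t : ℝ => (a + t * b) * (c + t * d))
      (b * c + a * d) 0 := by
    intro a b c d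
    have := (((hasDerivAt_id (0 : ℝ)).mul_const b).const_add a).fun_mul
      (((hasDerivAt_id (0 : ℝ)).mul_const d).const_add c)
    simpa using this
  have hprod := HasDerivAt.fun_sum (u := Finset.univ) fun (k : Fin r) _ =>
    hfac (θ.1 i k) (h.1 i k) (θ.2.1 j k) (h.2.1 j k)
  have h2 : HasDerivAt (fun t : ℝ => Fmap n1 n2 r Ω (θ + t • h) i j)
      ((factorTangent (Matrix.of θ.1) (Matrix.of θ.2.1) (Matrix.of h.1, Matrix.of h.2.1) +
        extendZero Ω h.2.2) i j) 0 := by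
    by_cases hij : (i, j) ∈ Ω
    · simpa [Fmap, factorTangent, extendZero, hij, Matrix.mul_apply, Finset.sum_add_distrib]
        using hprod
    · have hX : HasDerivAt (fun t : ℝ => θ.2.2 ⟨(i, j), hij⟩ + t * h.2.2 ⟨(i, j), hij⟩)
          (h.2.2 ⟨(i, j), hij⟩) 0 := by
        simpa using ((hasDerivAt_id (0 : ℝ)).mul_const _).const_add (θ.2.2 ⟨(i, j), hij⟩)
      simpa [Fmap, factorTangent, extendZero, hij, Matrix.mul_apply, Finset.sum_add_distrib]
        using hprod.fun_add hX
  exact h1.unique h2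

lemma derivRank_eq {n1 n2 r : ℕ} (Ω : Finset (Fin n1 × Fin n2))
    (θ : (Fin n1 → Fin r → ℝ) × (Fin n2 → Fin r → ℝ) ×
      ({p : Fin n1 × Fin n2 // p ∉ Ω} → ℝ)) :
    derivRank n1 n2 r Ω θ = Module.finrank ℝ
      ↥(LinearMap.range (factorTangent (Matrix.of θ.1) (Matrix.of θ.2.1)) ⊔
        LinearMap.range (extendZero Ω)) := by
  have key : (LinearMap.range (fderiv ℝ (Fmap n1 n2 r Ω) θ).toLinearMap).map
      (Matrix.ofLinearEquiv ℝ : (Fin n1 → Fin n2 → ℝ) ≃ₗ[ℝ] _).toLinearMap =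
      LinearMap.range (factorTangent (Matrix.of θ.1) (Matrix.of θ.2.1)) ⊔
        LinearMap.range (extendZero Ω) := by
    ext H
    simp only [Submodule.mem_map, LinearMap.mem_range, Submodule.mem_sup]
    constructor
    · rintro ⟨_, ⟨h, rfl⟩, rfl⟩
      exact ⟨_, ⟨_, rfl⟩, _, ⟨_, rfl⟩, (fderiv_Fmap_apply Ω θ h).symm⟩
    · rintro ⟨_, ⟨⟨A, B⟩, rfl⟩, _, ⟨Z, rfl⟩, rfl⟩
      exact ⟨_, ⟨(Matrix.of.symm A, Matrix.of.symm B, Z), rfl⟩, fderiv_Fmap_apply Ω θ _⟩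
  rw [← key]
  exact (LinearEquiv.finrank_map_eq _ _).symm

/-- If `θ = (V,W,X) ∈ Θ` is a regular point of `𝔉`, then `Y = V Wᵀ` satisfies
the well-posedness condition `V_{Ω^c} ∩ T(Y) = {0}` iff `ϱ = r(n1+n2−r) + n1·n2 − m`. -/
theorem stmt_18 (n1 n2 r m : ℕ) (hn1 : 2 ≤ n1) (hn2 : 2 ≤ n2)
    (hr1 : 1 ≤ r) (hr2 : r ≤ min n1 n2)
    (Ω : Finset (Fin n1 × Fin n2)) (hΩ : Ω.card = m)
    (θ : (Fin n1 → Fin r → ℝ) × (Fin n2 → Fin r → ℝ) ×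
      ({p : Fin n1 × Fin n2 // p ∉ Ω} → ℝ))
    (hθ : θ ∈ ThetaSet n1 n2 r Ω)
    (hreg : derivRank n1 n2 r Ω θ = charRank n1 n2 r Ω) :
    (∀ H : Matrix (Fin n1) (Fin n2) ℝ,
      (∀ (i : Fin n1) (j : Fin n2), (i, j) ∈ Ω → H i j = 0) →
      (∃ (Q1 : Matrix (Fin n1) (Fin n1) ℝ) (Q2 : Matrix (Fin n2) (Fin n2) ℝ),
        H = Q1 * (Matrix.of θ.1 * (Matrix.of θ.2.1)ᵀ) +
          (Matrix.of θ.1 * (Matrix.of θ.2.1)ᵀ) * Q2) → H = 0)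
    ↔ charRank n1 n2 r Ω = r * (n1 + n2 - r) + n1 * n2 - m := by
  obtain ⟨hV, hW⟩ := hθ
  set T := LinearMap.range (factorTangent (Matrix.of θ.1) (Matrix.of θ.2.1)) with hT
  set S := LinearMap.range (extendZero Ω) with hS
  have hwell : (∀ H : Matrix (Fin n1) (Fin n2) ℝ,
      (∀ (i : Fin n1) (j : Fin n2), (i, j) ∈ Ω → H i j = 0) →
      (∃ (Q1 : Matrix (Fin n1) (Fin n1) ℝ) (Q2 : Matrix (Fin n2) (Fin n2) ℝ),
        H = Q1 * (Matrix.of θ.1 * (Matrix.of θ.2.1)ᵀ) +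
          (Matrix.of θ.1 * (Matrix.of θ.2.1)ᵀ) * Q2) → H = 0) ↔ T ⊓ S = ⊥ := by
    simp only [Submodule.eq_bot_iff, Submodule.mem_inf, hT, hS,
      mem_range_factorTangent_iff hV hW, mem_range_extendZero_iff]
    exact forall_congr' fun H => ⟨fun h k => h k.2 k.1, fun h a b => h ⟨b, a⟩⟩
  have hdimT := finrank_range_factorTangent hV hW
  have hdimS := finrank_range_extendZero Ω
  have hgrass := Submodule.finrank_sup_add_finrank_inf_eq T S
  rw [← hT] at hdimT
  rw [← hS, hΩ] at hdimS
  have hm : m ≤ n1 * n2 := by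
    simpa [hΩ] using Finset.card_le_univ Ω
  -- `r ≤ n1 + n2` and `m ≤ n1 * n2` keep the truncated subtractions honest.
  have hsub : r * (n1 + n2 - r) + r * r = n1 * r + n2 * r := by
    rw [← Nat.mul_add, Nat.sub_add_cancel (by omega)]
    ring
  rw [hwell, ← hreg, derivRank_eq, ← hT, ← hS, ← Submodule.finrank_eq_zero (R := ℝ)]
  omega
end

section
/- Let p ≥ 1, let 𝔖 ⊆ {1,…,p}×{1,…,p} be a symmetric index set with complement 𝔖^c, and let Ξ ∈ W_𝔖 be a given symmetric matrix such that the feasible set {X ∈ W_{𝔖^c} : Ξ + X is positive semidefinite} is nonempty. Then for almost every positive definite matrix C ∈ W_{𝔖^c} (with respect to the Lebesgue measure on the subspace W_{𝔖^c}), the semidefinite program: minimize tr(C X) over X ∈ W_{𝔖^c} subject to Ξ + X positive semidefinite, has a unique optimal solution. -/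
open MeasureTheory
open scoped Matrix

/-!
The program minimizes the linear functional `tr (C ·)` over a closed convex set `F`.

*Existence.* Write `C = PᵀP` with `P` invertible. A positive semidefinite `M = BᵀB` satisfies
`tr (C M) = ‖B Pᵀ‖²` (Frobenius norm), so a bound on `tr (C M)` confines `B Pᵀ`, and hence `M`, to a
compact set (`exists_isCompact_of_trace_mul_le`). The objective therefore has compact sublevel sets
on `F` and attains its minimum (`exists_optimal`).

*Uniqueness almost everywhere.* Each feasible `X` defines a linear functional `c ↦ tr (C(c) X)` on
the parameter space, and two elements of `W_{𝔖^c}` defining the same functional are equal. For a set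
`A` of linear functionals and `N : ℕ`, the truncated optimal value
`f_N c = inf {L c | L ∈ A, ‖L‖ ≤ N}` is `N`-Lipschitz, so by Rademacher's theorem almost every `c` is
a point of differentiability of all the `f_N`. If `L ∈ A` with `‖L‖ ≤ N` attains the infimum at such
a `c`, then `f_N - L` has a maximum at `c`, so `L` is the derivative of `f_N` at `c`. Two minimizers
have norm at most a common `N`, so they coincide (`ae_minimizer_unique`).
-/

/-! ### Almost everywhere uniqueness of minimizing functionals -/

section Uniqueness

variable {E : Type*} [NormedAddCommGroup E] [NormedSpace ℝ E]

/-- Optimal value at `c` of minimizing `L c` over the functionals `L ∈ A` of norm at most `N`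
(with the junk value `0` when there are none). -/
noncomputable def truncValue (A : Set (E →L[ℝ] ℝ)) (N : ℕ) (c : E) : ℝ :=
  ⨅ L : {L : E →L[ℝ] ℝ // L ∈ A ∧ ‖L‖ ≤ N}, L.1 c

lemma truncValue_le {A : Set (E →L[ℝ] ℝ)} {N : ℕ} {L : E →L[ℝ] ℝ} (hL : L ∈ A) (hN : ‖L‖ ≤ N)
    (c : E) : truncValue A N c ≤ L c := by
  refine ciInf_le (f := fun L : {L : E →L[ℝ] ℝ // L ∈ A ∧ ‖L‖ ≤ N} => L.1 c)
    ⟨-(N * ‖c‖), ?_⟩ ⟨L, hL, hN⟩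
  rintro _ ⟨⟨L, -, hN⟩, rfl⟩
  have h1 := L.le_of_opNorm_le hN c
  exact (abs_le.1 h1).1

lemma lipschitzWith_truncValue (A : Set (E →L[ℝ] ℝ)) (N : ℕ) :
    LipschitzWith N (truncValue A N) := by
  refine LipschitzWith.of_le_add_mul _ fun x y => ?_
  rcases isEmpty_or_nonempty {L : E →L[ℝ] ℝ // L ∈ A ∧ ‖L‖ ≤ N} with h | h
  · simp only [truncValue, Real.iInf_of_isEmpty]
    positivity
  · rw [← sub_le_iff_le_add]
    refine le_ciInf fun L => ?_
    have h1 := truncValue_le L.2.1 L.2.2 x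
    have h2 := L.1.le_of_opNorm_le L.2.2 (x - y)
    rw [map_sub, ← dist_eq_norm x y] at h2
    have h3 := (abs_le.1 h2).2
    push_cast
    linarith

/-- A minimizer at a point of differentiability of the optimal value is the derivative there. -/
lemma eq_fderiv_truncValue {A : Set (E →L[ℝ] ℝ)} {N : ℕ} {L : E →L[ℝ] ℝ} (hL : L ∈ A)
    (hN : ‖L‖ ≤ N) {c : E} (hmin : ∀ L' ∈ A, L c ≤ L' c)
    (hd : DifferentiableAt ℝ (truncValue A N) c) : fderiv ℝ (truncValue A N) c = L := by
  have hge : L c ≤ truncValue A N c := by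
    have : Nonempty {L : E →L[ℝ] ℝ // L ∈ A ∧ ‖L‖ ≤ N} := ⟨⟨L, hL, hN⟩⟩
    exact le_ciInf fun L' => hmin _ L'.2.1
  -- `truncValue A N ≤ L` everywhere, with equality at `c`
  have hmax : IsLocalMax (fun x => truncValue A N x - L x) c := by
    refine Filter.Eventually.of_forall fun x => ?_
    have := truncValue_le hL hN x
    dsimp only
    linarith
  exact sub_eq_zero.1 (hmax.hasFDerivAt_eq_zero (hd.hasFDerivAt.sub L.hasFDerivAt))

/-- For almost every `c`, at most one element of a set of linear functionals minimizes the value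
at `c`. -/
theorem ae_minimizer_unique [FiniteDimensional ℝ E] [MeasurableSpace E] [BorelSpace E]
    (μ : Measure E) [μ.IsAddHaarMeasure] (A : Set (E →L[ℝ] ℝ)) :
    ∀ᵐ c ∂μ, ∀ L ∈ A, ∀ L' ∈ A, (∀ K ∈ A, L c ≤ K c) → (∀ K ∈ A, L' c ≤ K c) → L = L' := by
  have h : ∀ᵐ c ∂μ, ∀ N : ℕ, DifferentiableAt ℝ (truncValue A N) c :=
    ae_all_iff.2 fun N => (lipschitzWith_truncValue A N).ae_differentiableAt
  filter_upwards [h] with c hc L hL L' hL' hm hm'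
  obtain ⟨N, hN⟩ := exists_nat_ge (max ‖L‖ ‖L'‖)
  rw [← eq_fderiv_truncValue hL ((le_max_left _ _).trans hN) hm (hc N),
    ← eq_fderiv_truncValue hL' ((le_max_right _ _).trans hN) hm' (hc N)]

end Uniqueness

/-! ### Existence of an optimal solution -/

section Existence

variable {n : Type*} [Fintype n]

lemma isClosed_posSemidef : IsClosed {M : Matrix n n ℝ | M.PosSemidef} := by
  simp only [Matrix.posSemidef_iff_dotProduct_mulVec, Matrix.IsHermitian, Set.ofPred_and,
    Set.ofPred_forall]
  refine IsClosed.inter (isClosed_eq (by fun_prop) (by fun_prop)) (isClosed_iInter fun x => ?_)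
  exact isClosed_le (by fun_prop) (by fun_prop)

lemma trace_mul_transpose_self (D : Matrix n n ℝ) : (D * Dᵀ).trace = ∑ i, ∑ j, D i j ^ 2 := by
  simp [Matrix.trace, Matrix.mul_apply, sq]

variable [DecidableEq n]

open scoped MatrixOrder ComplexOrder Matrix.Norms.L2Operator in
lemma posSemidef_exists_factor {M : Matrix n n ℝ} (hM : M.PosSemidef) :
    ∃ B : Matrix n n ℝ, M = Bᵀ * B := by
  obtain ⟨B, hB⟩ := CStarAlgebra.nonneg_iff_eq_star_mul_self.1 hM.nonneg
  exact ⟨B, by simpa [Matrix.star_eq_conjTranspose, Matrix.conjTranspose_eq_transpose_of_trivial]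
    using hB⟩

/-- For `C` positive definite, the positive semidefinite `M` with `tr (C M) ≤ t` form a
relatively compact set. -/
lemma exists_isCompact_of_trace_mul_le {C : Matrix n n ℝ} (hC : C.PosDef) (t : ℝ) :
    ∃ K : Set (Matrix n n ℝ), IsCompact K ∧
      ∀ M : Matrix n n ℝ, M.PosSemidef → (C * M).trace ≤ t → M ∈ K := by
  obtain ⟨P, rfl⟩ := posSemidef_exists_factor hC.posSemidef
  have hP : IsUnit P.det := by
    have := hC.det_pos.ne'
    rw [Matrix.det_mul] at this
    exact isUnit_iff_ne_zero.2 (right_ne_zero_of_mul this)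
  have hPt : IsUnit Pᵀ.det := by rwa [Matrix.det_transpose]
  -- `M = BᵀB` is recovered from `D = B Pᵀ`, whose entries are at most `√t` in absolute value.
  let g : Matrix n n ℝ → Matrix n n ℝ := fun D => (D * Pᵀ⁻¹)ᵀ * (D * Pᵀ⁻¹)
  have hg : Continuous g := by fun_prop
  let Q : Set (Matrix n n ℝ) :=
    Set.univ.pi fun _ => Set.univ.pi fun _ => Set.Icc (-Real.sqrt t) (Real.sqrt t)
  have hQ : IsCompact Q := isCompact_univ_pi fun _ => isCompact_univ_pi fun _ => isCompact_Icc
  refine ⟨g '' Q, hQ.image hg, fun M hM ht => ?_⟩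
  obtain ⟨B, rfl⟩ := posSemidef_exists_factor hM
  refine ⟨B * Pᵀ, ?_, ?_⟩
  · have key : (Pᵀ * P * (Bᵀ * B)).trace = ((B * Pᵀ) * (B * Pᵀ)ᵀ).trace := by
      rw [Matrix.transpose_mul, Matrix.transpose_transpose, ← Matrix.mul_assoc, Matrix.trace_mul_comm]
      simp only [Matrix.mul_assoc]
    rw [key, trace_mul_transpose_self] at ht
    refine fun i _ j _ => abs_le.1 (Real.abs_le_sqrt (le_trans ?_ ht))
    refine le_trans ?_ (Finset.single_le_sum
      (f := fun i => ∑ j, (B * Pᵀ) i j ^ 2) (fun i _ => by positivity) (Finset.mem_univ i))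
    exact Finset.single_le_sum (f := fun j => (B * Pᵀ) i j ^ 2)
      (fun j _ => by positivity) (Finset.mem_univ j)
  · simp only [g]
    rw [Matrix.mul_nonsing_inv_cancel_right _ _ hPt]

/-- For `C` positive definite and `W` closed, `tr (C X)` attains its minimum over the `X ∈ W` with
`Ξ + X` positive semidefinite, as soon as there is such an `X`. -/
lemma exists_optimal {C : Matrix n n ℝ} (hC : C.PosDef) (Ξ : Matrix n n ℝ)
    {W : Set (Matrix n n ℝ)} (hW : IsClosed W) (hne : ∃ X ∈ W, (Ξ + X).PosSemidef) :
    ∃ X ∈ W, (Ξ + X).PosSemidef ∧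
      ∀ X' ∈ W, (Ξ + X').PosSemidef → (C * X).trace ≤ (C * X').trace := by
  obtain ⟨X₀, hX₀, hp₀⟩ := hne
  obtain ⟨K, hK, hKM⟩ := exists_isCompact_of_trace_mul_le hC (C * (Ξ + X₀)).trace
  have hF : IsClosed {M : Matrix n n ℝ | M - Ξ ∈ W ∧ M.PosSemidef} :=
    (hW.preimage (continuous_id.sub continuous_const)).inter isClosed_posSemidef
  obtain ⟨M, ⟨hMK, hMW, hMp⟩, hmin⟩ := (hK.inter_right hF).exists_isMinOn
    (f := fun M => (C * M).trace) ⟨Ξ + X₀, hKM _ hp₀ le_rfl, by simpa using hX₀, hp₀⟩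
    (by fun_prop)
  have hM₀ : (C * M).trace ≤ (C * (Ξ + X₀)).trace :=
    hmin ⟨hKM _ hp₀ le_rfl, by simpa using hX₀, hp₀⟩
  refine ⟨M - Ξ, hMW, by simpa using hMp, fun X' hX' hp' => ?_⟩
  -- a point outside the compact sublevel set of `Ξ + X₀` has a larger value than `Ξ + X₀`
  have h : (C * M).trace ≤ (C * (Ξ + X')).trace := by
    by_cases hle : (C * (Ξ + X')).trace ≤ (C * (Ξ + X₀)).trace
    · exact hmin ⟨hKM _ hp' hle, by simpa using hX', hp'⟩
    · exact hM₀.trans (not_le.1 hle).le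
  rw [Matrix.mul_add, Matrix.trace_add] at h
  rw [Matrix.mul_sub, Matrix.trace_sub]
  linarith

end Existence

/-! ### Coordinates on `W_{𝔖^c}` and the trace pairing -/

section Parametrization

variable {p : ℕ} (S : Finset (Fin p × Fin p))

/-- The matrix whose entries outside `S` on or above the diagonal are the coordinates `c`, reflected
below the diagonal; linear in `c`. For symmetric `S` it parametrizes `W_{𝔖^c}`. -/
def coordMatrix :
    ({q : Fin p × Fin p // q ∉ S ∧ q.1 ≤ q.2} → ℝ) →ₗ[ℝ] Matrix (Fin p) (Fin p) ℝ where
  toFun c := Matrix.of fun i j =>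
    if h : (i, j) ∉ S ∧ i ≤ j then c ⟨(i, j), h⟩
    else if h' : (j, i) ∉ S ∧ j ≤ i then c ⟨(j, i), h'⟩ else 0
  map_add' c d := by
    ext i j
    simp only [Matrix.of_apply, Matrix.add_apply, Pi.add_apply]
    split_ifs <;> simp
  map_smul' r c := by
    ext i j
    simp only [Matrix.of_apply, Matrix.smul_apply, Pi.smul_apply, RingHom.id_apply]
    split_ifs <;> simp

variable {S}

lemma exists_coordMatrix_eq (hS : ∀ i j : Fin p, (i, j) ∈ S → (j, i) ∈ S)
    {D : Matrix (Fin p) (Fin p) ℝ} (hD : Dᵀ = D) (hDS : ∀ i j : Fin p, (i, j) ∈ S → D i j = 0) :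
    ∃ c, coordMatrix S c = D := by
  refine ⟨fun q => D q.1.1 q.1.2, ?_⟩
  ext i j
  have hij : D j i = D i j := congrFun (congrFun hD i) j
  simp only [coordMatrix, LinearMap.coe_mk, AddHom.coe_mk, Matrix.of_apply]
  split_ifs with h h'
  · rfl
  · exact hij
  · refine (hDS i j ?_).symm
    rcases le_total i j with hle | hle
    · by_contra hn
      exact h ⟨hn, hle⟩
    · by_contra hn
      exact h' ⟨fun hm => hn (hS _ _ hm), hle⟩

variable (S)

/-- The functional `c ↦ tr (C(c) X)` on the coordinate space. -/
noncomputable def traceFunctional (X : Matrix (Fin p) (Fin p) ℝ) :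
    ({q : Fin p × Fin p // q ∉ S ∧ q.1 ≤ q.2} → ℝ) →L[ℝ] ℝ :=
  LinearMap.toContinuousLinearMap
    (Matrix.traceLinearMap (Fin p) ℝ ℝ ∘ₗ LinearMap.mulRight ℝ X ∘ₗ coordMatrix S)

lemma traceFunctional_apply (X : Matrix (Fin p) (Fin p) ℝ) (c) :
    traceFunctional S X c = (coordMatrix S c * X).trace := rfl

variable {S}

/-- The trace pairing is definite on `W_{𝔖^c}`, so the functional determines `X`. -/
lemma traceFunctional_injOn (hS : ∀ i j : Fin p, (i, j) ∈ S → (j, i) ∈ S)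
    {X Y : Matrix (Fin p) (Fin p) ℝ}
    (hX : Xᵀ = X) (hXS : ∀ i j : Fin p, (i, j) ∈ S → X i j = 0)
    (hY : Yᵀ = Y) (hYS : ∀ i j : Fin p, (i, j) ∈ S → Y i j = 0)
    (h : traceFunctional S X = traceFunctional S Y) : X = Y := by
  have hD : (X - Y)ᵀ = X - Y := by rw [Matrix.transpose_sub, hX, hY]
  obtain ⟨c, hc⟩ := exists_coordMatrix_eq hS hD
    (fun i j hij => by simp [hXS i j hij, hYS i j hij])
  have h1 := DFunLike.congr_fun h c
  rw [traceFunctional_apply, traceFunctional_apply, hc, ← sub_eq_zero, ← Matrix.trace_sub,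
    ← Matrix.mul_sub] at h1
  nth_rewrite 2 [← hD] at h1
  rw [← Matrix.conjTranspose_eq_transpose_of_trivial,
    Matrix.trace_mul_conjTranspose_self_eq_zero_iff] at h1
  exact sub_eq_zero.1 h1

end Parametrization

/-- For a symmetric index set `𝔖` and data `Ξ ∈ W_𝔖` with nonempty feasible
set, for almost every positive definite `C ∈ W_{𝔖^c}` (parametrized by its nonduplicated
entries `c` on the upper-triangular part of `𝔖^c`), the SDP
`min tr(C X)` over `X ∈ W_{𝔖^c}` with `Ξ + X ⪰ 0` has a unique optimal solution. -/
theorem stmt_19 (p : ℕ) (hp : 1 ≤ p) (S : Finset (Fin p × Fin p))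
    (hSsym : ∀ i j : Fin p, (i, j) ∈ S → (j, i) ∈ S)
    (Ξ : Matrix (Fin p) (Fin p) ℝ) (hΞsym : Ξᵀ = Ξ)
    (hΞsupp : ∀ i j : Fin p, (i, j) ∉ S → Ξ i j = 0)
    (hfeas : ∃ X : Matrix (Fin p) (Fin p) ℝ, Xᵀ = X ∧
      (∀ i j : Fin p, (i, j) ∈ S → X i j = 0) ∧ (Ξ + X).PosSemidef) :
    ∀ᵐ c : ({q : Fin p × Fin p // q ∉ S ∧ q.1 ≤ q.2} → ℝ) ∂volume,
      ∀ C : Matrix (Fin p) (Fin p) ℝ,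
        C = (Matrix.of fun i j =>
          if h : (i, j) ∉ S ∧ i ≤ j then c ⟨(i, j), h⟩
          else if h' : (j, i) ∉ S ∧ j ≤ i then c ⟨(j, i), h'⟩ else 0) →
        C.PosDef →
        ∃! X : Matrix (Fin p) (Fin p) ℝ,
          Xᵀ = X ∧ (∀ i j : Fin p, (i, j) ∈ S → X i j = 0) ∧ (Ξ + X).PosSemidef ∧
          ∀ X' : Matrix (Fin p) (Fin p) ℝ,
            X'ᵀ = X' → (∀ i j : Fin p, (i, j) ∈ S → X' i j = 0) → (Ξ + X').PosSemidef →
            (C * X).trace ≤ (C * X').trace := by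
  filter_upwards [ae_minimizer_unique volume (traceFunctional S ''
    {X | Xᵀ = X ∧ (∀ i j : Fin p, (i, j) ∈ S → X i j = 0) ∧ (Ξ + X).PosSemidef})] with c hc C hCc hC
  have hW : IsClosed {X : Matrix (Fin p) (Fin p) ℝ |
      Xᵀ = X ∧ ∀ i j : Fin p, (i, j) ∈ S → X i j = 0} := by
    simp only [Set.ofPred_and, Set.ofPred_forall]
    refine IsClosed.inter (isClosed_eq (by fun_prop) (by fun_prop))
      (isClosed_iInter fun i => isClosed_iInter fun j => isClosed_iInter fun _ =>
        isClosed_eq (by fun_prop) (by fun_prop))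
  obtain ⟨X₀, h₀, h₀', h₀''⟩ := hfeas
  obtain ⟨X, ⟨hX, hXS⟩, hXp, hmin⟩ := exists_optimal hC Ξ hW ⟨X₀, ⟨h₀, h₀'⟩, h₀''⟩
  have hmin' : ∀ X' : Matrix (Fin p) (Fin p) ℝ,
      X'ᵀ = X' → (∀ i j : Fin p, (i, j) ∈ S → X' i j = 0) → (Ξ + X').PosSemidef →
      (C * X).trace ≤ (C * X').trace := fun X' h h' => hmin X' ⟨h, h'⟩
  replace hCc : C = coordMatrix S c := hCc
  subst hCc
  refine ⟨X, ⟨hX, hXS, hXp, hmin'⟩, ?_⟩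
  rintro Y ⟨hY, hYS, hYp, hYmin⟩
  refine traceFunctional_injOn hSsym hY hYS hX hXS
    (hc _ ⟨Y, ⟨hY, hYS, hYp⟩, rfl⟩ _ ⟨X, ⟨hX, hXS, hXp⟩, rfl⟩ ?_ ?_)
  · rintro _ ⟨Z, ⟨hZ, hZS, hZp⟩, rfl⟩
    exact hYmin Z hZ hZS hZp
  · rintro _ ⟨Z, ⟨hZ, hZS, hZp⟩, rfl⟩
    exact hmin' Z hZ hZS hZp
end
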